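/- arXiv:2001.03938 — 2 statements merged into one kernel-verified Lean document; each statement's English description precedes it below -/
import Mathlib

section
/- Let G be a simple graph on [n] with no isolated vertex such that I = I(G) has almost maximal finite index t. Then β_{t, t+4}(I) = β_{t, t+5}(I) = 0, and the regularity of I equals 3 unless the complement of G is the 4-gonal dipyramid G_{(d)_1}, in which case reg(I) = 4. -/
open Finsupp

namespace EP

variable (K : Type) [Field K]

/-! ## Simplicial chains over a linearly ordered vertex set -/

variable {V : Type} [Fintype V] [DecidableEq V] [LinearOrder V]

/-- Boundary of a single (oriented) face, given as a finset. -/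
noncomputable def bdFace (s : Finset V) : Finset V →₀ K :=
  ∑ v ∈ s, ((-1 : K) ^ ((s.filter (fun w => w < v)).card)) • Finsupp.single (s.erase v) 1

/-- The simplicial boundary map on the free module on all finsets of vertices
(the augmented oriented chain complex, with the empty set playing the role of
the `(-1)`-dimensional face). -/
noncomputable def bdS : (Finset V →₀ K) →ₗ[K] (Finset V →₀ K) :=
  Finsupp.lsum K fun s => LinearMap.toSpanSingleton K (Finset V →₀ K) (bdFace K s)

/-- Chains supported on faces of a complex `Δ` having `k` vertices. -/
noncomputable def faceSpan (Δ : Set (Finset V)) (k : ℕ) : Submodule K (Finset V →₀ K) :=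
  Submodule.span K {c | ∃ F ∈ Δ, F.card = k ∧ c = Finsupp.single F 1}

/-- Dimension of the `d`-th reduced simplicial homology of `Δ` over `K`. -/
noncomputable def redHomRank (Δ : Set (Finset V)) (d : ℕ) : ℕ :=
  Module.finrank K ↥(faceSpan K Δ (d+1) ⊓ LinearMap.ker (bdS K)) -
    Module.finrank K
      ↥(Submodule.map (bdS K) (faceSpan K Δ (d+2)) ⊓
          (faceSpan K Δ (d+1) ⊓ LinearMap.ker (bdS K)))

/-- The flag complex of a graph: faces are the cliques. -/
def flagComplex (G : SimpleGraph V) : Set (Finset V) :=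
  {F | ∀ i ∈ F, ∀ j ∈ F, i ≠ j → G.Adj i j}

/-- The flag complex of the induced subgraph of `G` on `W`. -/
def flagComplexOn (G : SimpleGraph V) (W : Finset V) : Set (Finset V) :=
  {F | (F : Set V) ⊆ (W : Set V) ∧ ∀ i ∈ F, ∀ j ∈ F, i ≠ j → G.Adj i j}

/-- The induced subcomplex of `Δ` on a vertex subset `W`. -/
def restrictComplex (Δ : Set (Finset V)) (W : Finset V) : Set (Finset V) :=
  {F | F ∈ Δ ∧ F ⊆ W}

/-- The oriented `1`-chain `[a,b]` (so `[a,b] = -[b,a]`). -/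
noncomputable def edgeChain (a b : V) : Finset V →₀ K :=
  if a < b then Finsupp.single {a, b} 1 else -Finsupp.single {a, b} 1

/-- The oriented `2`-chain `[x,y,z]`, antisymmetric under transpositions. -/
noncomputable def triChain (x y z : V) : Finset V →₀ K :=
  if (x < y ∧ y < z) ∨ (y < z ∧ z < x) ∨ (z < x ∧ x < y)
  then Finsupp.single {x, y, z} 1
  else -Finsupp.single {x, y, z} 1

/-! ## Graded Betti numbers of monomial ideals via the Taylor complex -/

variable {n : ℕ}

/-- The multidegree lcm of the monomial generators indexed by `S`. -/
def mlcm {r : ℕ} (g : Fin r → (Fin n → ℕ)) (S : Finset (Fin r)) : Fin n → ℕ :=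
  fun x => S.sup fun k => g k x

/-- The differential of the Taylor complex tensored with the residue field `K`. -/
noncomputable def bdT {r : ℕ} (g : Fin r → (Fin n → ℕ)) :
    (Finset (Fin r) →₀ K) →ₗ[K] (Finset (Fin r) →₀ K) :=
  Finsupp.lsum K fun S => LinearMap.toSpanSingleton K (Finset (Fin r) →₀ K)
    (∑ k ∈ S, if mlcm g (S.erase k) = mlcm g S
      then ((-1 : K) ^ ((S.filter (fun j => j < k)).card)) • Finsupp.single (S.erase k) (1 : K)
      else 0)

/-- The degree-`j` strand of the Taylor complex in homological degree `p`. -/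
noncomputable def strand {r : ℕ} (g : Fin r → (Fin n → ℕ)) (p j : ℕ) :
    Submodule K (Finset (Fin r) →₀ K) :=
  Submodule.span K
    {c | ∃ S : Finset (Fin r), S.card = p ∧ (∑ x, mlcm g S x) = j ∧ c = Finsupp.single S 1}

/-- `dim_K Tor_p(S/I, K)_j`, computed from the Taylor complex on the monomial
generators `g` of `I`. -/
noncomputable def torRank {r : ℕ} (g : Fin r → (Fin n → ℕ)) (p j : ℕ) : ℕ :=
  Module.finrank K ↥(strand K g p j ⊓ LinearMap.ker (bdT K g)) -
    Module.finrank K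
      ↥(Submodule.map (bdT K g) (strand K g (p+1) j) ⊓
          (strand K g p j ⊓ LinearMap.ker (bdT K g)))

/-- The graded Betti number `β_{i,j}(I)` of the monomial ideal `I` generated by
the monomials with exponent vectors `g`, i.e. `dim_K Tor_i(I, K)_j = dim_K Tor_{i+1}(S/I, K)_j`. -/
noncomputable def betti {r : ℕ} (g : Fin r → (Fin n → ℕ)) (i j : ℕ) : ℕ :=
  torRank K g (i+1) j

/-- The monomial with exponent vector `a`. -/
noncomputable def mono (a : Fin n → ℕ) : MvPolynomial (Fin n) K :=
  MvPolynomial.monomial (Finsupp.equivFunOnFinite.symm a) 1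

/-- `g` is a list of exponent vectors of monomials generating the ideal `I`. -/
def IsGenSet {r : ℕ} (g : Fin r → (Fin n → ℕ)) (I : Ideal (MvPolynomial (Fin n) K)) : Prop :=
  Ideal.span (Set.range fun k => mono K (g k)) = I

/-- The ideal (generated by the monomials with exponent vectors `g`) has a
`d`-linear resolution. -/
def HasLinRes {r : ℕ} (g : Fin r → (Fin n → ℕ)) (d : ℕ) : Prop :=
  ∀ i j, betti K g i j ≠ 0 → j = i + d

/-- Castelnuovo–Mumford regularity of a monomial ideal, from its Betti numbers. -/
noncomputable def regT {r : ℕ} (g : Fin r → (Fin n → ℕ)) : ℕ :=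
  sSup {d | ∃ i j, betti K g i j ≠ 0 ∧ j = i + d}

/-! ## Edge ideals -/

/-- The edge ideal of a simple graph. -/
noncomputable def edgeIdeal (G : SimpleGraph (Fin n)) : Ideal (MvPolynomial (Fin n) K) :=
  Ideal.span {m | ∃ i j : Fin n, G.Adj i j ∧ m = MvPolynomial.X i * MvPolynomial.X j}

/-- The edge set of `G` as a finset. -/
noncomputable def edgeFins (G : SimpleGraph (Fin n)) : Finset (Sym2 (Fin n)) :=
  letI : Fintype ↥G.edgeSet := Fintype.ofFinite _
  G.edgeFinset

/-- The canonical monomial (exponent vector) generators of the edge ideal of `G`. -/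
noncomputable def edgeGens (G : SimpleGraph (Fin n)) : Fin (edgeFins G).card → (Fin n → ℕ) :=
  fun k x => if x ∈ ((edgeFins G).equivFin.symm k : Sym2 (Fin n)) then 1 else 0

/-- The graded Betti numbers `β_{i,j}(I(G))` of the edge ideal of `G` over `K`. -/
noncomputable def gBetti (G : SimpleGraph (Fin n)) (i j : ℕ) : ℕ :=
  betti K (edgeGens G) i j

/-- The projective dimension `pd(I(G))` of the edge ideal of `G` over `K`. -/
noncomputable def gPd (G : SimpleGraph (Fin n)) : ℕ :=
  sSup {i | ∃ j, gBetti K G i j ≠ 0}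

/-- The Green–Lazarsfeld index of the edge ideal of `G` over `K`
(`⊤` iff the ideal has a linear resolution). -/
noncomputable def gIndex (G : SimpleGraph (Fin n)) : ℕ∞ :=
  sInf {N : ℕ∞ | ∃ i j : ℕ, N = (i : ℕ∞) ∧ i + 2 < j ∧ gBetti K G i j ≠ 0}

/-- The regularity of the edge ideal of `G` over `K`. -/
noncomputable def gReg (G : SimpleGraph (Fin n)) : ℕ :=
  sSup {d | ∃ i j, gBetti K G i j ≠ 0 ∧ j = i + d}

/-- The edge ideal of `G` has a (2-)linear resolution over `K`. -/
def gLinRes (G : SimpleGraph (Fin n)) : Prop :=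
  ∀ i j, gBetti K G i j ≠ 0 → j = i + 2

/-- The edge ideal of `G` has almost maximal finite index over `K`:
`index(I(G)) = pd(I(G)) - 1` (with the index finite). -/
def AMFI (G : SimpleGraph (Fin n)) : Prop :=
  gIndex K G + 1 = (gPd K G : ℕ∞)

/-! ## Graph-theoretic notions -/

/-- `H` contains an induced (chordless) cycle of length `l`. -/
def HasInducedCycle {W : Type} (H : SimpleGraph W) (l : ℕ) : Prop :=
  ∃ f : ZMod l → W, Function.Injective f ∧
    ∀ i j : ZMod l, H.Adj (f i) (f j) ↔ (j = i + 1 ∨ i = j + 1)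

/-- `H` is chordal: it has no induced cycle of length greater than `3`. -/
def Chordal {W : Type} (H : SimpleGraph W) : Prop :=
  ∀ l : ℕ, 3 < l → ¬ HasInducedCycle H l

end EP


/-- The graph `G_{(d)_1}`: the `4`-gonal dipyramid, i.e. a `4`-cycle `0 - 1 - 2 - 3 - 0`
with two apexes `4` and `5` each adjacent to all of `0, 1, 2, 3` (and `4, 5` not adjacent). -/
def Gd1 : SimpleGraph (Fin 6) :=
  SimpleGraph.fromRel (fun i j =>
    (i, j) ∈ ([(0, 1), (1, 2), (2, 3), (0, 3), (4, 0), (4, 1), (4, 2), (4, 3),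
      (5, 0), (5, 1), (5, 2), (5, 3)] : List (Fin 6 × Fin 6)))

namespace EPX

section chains

variable {K : Type} [Field K] {r n : ℕ}

/-- sign of inserting `k` -/
noncomputable def sgn (K : Type) [Field K] (k : Fin r) (S : Finset (Fin r)) : K :=
  (-1 : K) ^ ((S.filter (fun j => j < k)).card)

theorem sgn_eq (k : Fin r) (S : Finset (Fin r)) :
    sgn K k S = ∏ j ∈ S, if j < k then (-1 : K) else 1 := by
  rw [sgn, Finset.prod_ite]; simp

theorem sgn_mul_self (k : Fin r) (S : Finset (Fin r)) : sgn K k S * sgn K k S = 1 := by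
  rw [sgn, ← mul_pow]; simp

theorem sgn_insert (k e : Fin r) (S : Finset (Fin r)) (h : e ∉ S) :
    sgn K k (insert e S) = (if e < k then (-1 : K) else 1) * sgn K k S := by
  rw [sgn_eq, sgn_eq, Finset.prod_insert h]

theorem sgn_erase (k e : Fin r) (S : Finset (Fin r)) (h : e ∈ S) :
    sgn K k (S.erase e) = (if e < k then (-1 : K) else 1) * sgn K k S := by
  conv_rhs => rw [← Finset.insert_erase h, sgn_insert _ _ _ (Finset.notMem_erase e S)]
  split_ifs <;> simp

/-- full boundary -/
noncomputable def bd (K : Type) [Field K] {r : ℕ} :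
    (Finset (Fin r) →₀ K) →ₗ[K] (Finset (Fin r) →₀ K) :=
  Finsupp.lsum K fun S => LinearMap.toSpanSingleton K (Finset (Fin r) →₀ K)
    (∑ k ∈ S, sgn K k S • Finsupp.single (S.erase k) (1 : K))

/-- wedge with `e` -/
noncomputable def wd {K : Type} [Field K] {r : ℕ} (e : Fin r) :
    (Finset (Fin r) →₀ K) →ₗ[K] (Finset (Fin r) →₀ K) :=
  Finsupp.lsum K fun S => LinearMap.toSpanSingleton K (Finset (Fin r) →₀ K)
    (if e ∈ S then 0 else sgn K e S • Finsupp.single (insert e S) (1 : K))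

theorem bd_single (S : Finset (Fin r)) :
    bd K (Finsupp.single S 1) = ∑ k ∈ S, sgn K k S • Finsupp.single (S.erase k) (1 : K) := by
  simp [bd]

theorem wd_single (e : Fin r) (S : Finset (Fin r)) :
    wd e (Finsupp.single S (1 : K)) =
      if e ∈ S then 0 else sgn K e S • Finsupp.single (insert e S) (1 : K) := by
  simp [wd]

theorem anti_single (e : Fin r) (S : Finset (Fin r)) :
    bd K (wd e (Finsupp.single S 1)) + wd e (bd K (Finsupp.single S 1)) = Finsupp.single S 1 := by
  rw [wd_single, bd_single, map_sum]
  simp only [map_smul, wd_single]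
  by_cases h : e ∈ S
  · rw [if_pos h, map_zero, zero_add, Finset.sum_eq_single e]
    · rw [if_neg (Finset.notMem_erase e S), smul_smul, sgn_erase _ _ _ h, Finset.insert_erase h]
      simp [sgn_mul_self]
    · intro k hk hke
      rw [if_pos (Finset.mem_erase.2 ⟨hke.symm, h⟩), smul_zero]
    · intro h'; exact absurd h h'
  · rw [if_neg h, map_smul, bd_single, Finset.sum_insert h, smul_add, smul_smul,
      sgn_insert _ _ _ h, Finset.erase_insert h, add_assoc]
    have : sgn K e S • ∑ k ∈ S, sgn K k (insert e S) • Finsupp.single ((insert e S).erase k) (1 : K)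
      + ∑ k ∈ S, sgn K k S • (if e ∈ S.erase k then (0 : Finset (Fin r) →₀ K) else
          sgn K e (S.erase k) • Finsupp.single (insert e (S.erase k)) 1) = 0 := by
      rw [Finset.smul_sum, ← Finset.sum_add_distrib]
      apply Finset.sum_eq_zero
      intro k hk
      have hke : k ≠ e := fun h' => h (h' ▸ hk)
      rw [if_neg (fun h' => h (Finset.mem_of_mem_erase h')), smul_smul, smul_smul,
        sgn_insert _ _ _ h, sgn_erase _ _ _ hk, Finset.erase_insert_of_ne hke.symm, ← add_smul]
      convert zero_smul K _
      rcases lt_or_gt_of_ne hke with h1 | h1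
      · simp [h1, h1.le.not_gt]; ring
      · simp [h1, h1.le.not_gt]; ring
    rw [this]; simp [sgn_mul_self]

theorem anti (e : Fin r) (z : Finset (Fin r) →₀ K) : bd K (wd e z) + wd e (bd K z) = z := by
  induction z using Finsupp.induction_linear with
  | zero => simp
  | add f g hf hg => rw [map_add, map_add, map_add, map_add]; nth_rewrite 3 [← hf]
                     nth_rewrite 3 [← hg]; abel
  | single S a =>
    rw [← mul_one a, ← smul_eq_mul, ← Finsupp.smul_single, map_smul, map_smul, map_smul, map_smul,
      ← smul_add, anti_single]

theorem bd_bd (z : Finset (Fin r) →₀ K) : bd K (bd K z) = 0 := by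
  have key : ∀ (e : Fin r) (z : Finset (Fin r) →₀ K), bd K (bd K z) = 0 →
      bd K (bd K (wd e z)) = 0 := by
    intro e z hz
    have h1 : bd K (wd e z) = z - wd e (bd K z) := eq_sub_of_add_eq (anti e z)
    have h2 := anti e (bd K z)
    rw [hz, map_zero, add_zero] at h2
    rw [h1, map_sub, h2, sub_self]
  have hS : ∀ S : Finset (Fin r), bd K (bd K (Finsupp.single S 1)) = 0 := by
    intro S
    induction S using Finset.induction_on with
    | empty => simp [bd_single]
    | insert e S he ih =>
      have := key e _ ih
      rw [wd_single, if_neg he, map_smul, map_smul] at this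
      have h2 := congrArg (fun x => sgn K e S • x) this
      simpa [smul_smul, sgn_mul_self] using h2
  induction z using Finsupp.induction_linear with
  | zero => simp
  | add f g hf hg => rw [map_add, map_add, hf, hg, add_zero]
  | single S a =>
    rw [← mul_one a, ← smul_eq_mul, ← Finsupp.smul_single, map_smul, map_smul, hS, smul_zero]

/-- supported chains -/
abbrev Sp (K : Type) [Field K] {r : ℕ} (P : Finset (Fin r) → Prop) :
    Submodule K (Finset (Fin r) →₀ K) := Finsupp.supported K K {S | P S}

theorem mem_Sp {P : Finset (Fin r) → Prop} {z : Finset (Fin r) →₀ K} :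
    z ∈ Sp K P ↔ ∀ S, ¬ P S → z S = 0 := by
  rw [Sp, Finsupp.mem_supported']; rfl

theorem Sp_mono {P Q : Finset (Fin r) → Prop} {z : Finset (Fin r) →₀ K} (hz : z ∈ Sp K P)
    (h : ∀ S, P S → Q S) : z ∈ Sp K Q :=
  mem_Sp.2 fun S hS => mem_Sp.1 hz S fun h' => hS (h S h')

theorem Sp_and {P Q : Finset (Fin r) → Prop} {z : Finset (Fin r) →₀ K} (hz : z ∈ Sp K P)
    (hz' : z ∈ Sp K Q) : z ∈ Sp K (fun S => P S ∧ Q S) :=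
  mem_Sp.2 fun S hS => by
    by_cases h : P S
    · exact mem_Sp.1 hz' S fun h' => hS ⟨h, h'⟩
    · exact mem_Sp.1 hz S h

theorem single_mem {P : Finset (Fin r) → Prop} {S : Finset (Fin r)} (h : P S) :
    Finsupp.single S (1 : K) ∈ Sp K P := Finsupp.single_mem_supported K _ h

theorem Sp_map (f : (Finset (Fin r) →₀ K) →ₗ[K] (Finset (Fin r) →₀ K))
    {P : Finset (Fin r) → Prop} (N : Submodule K (Finset (Fin r) →₀ K))
    (h : ∀ S, P S → f (Finsupp.single S 1) ∈ N) {z : Finset (Fin r) →₀ K} (hz : z ∈ Sp K P) :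
    f z ∈ N := by
  have : Sp K P ≤ N.comap f := by
    rw [Sp, Finsupp.supported_eq_span_single, Submodule.span_le]
    rintro _ ⟨S, hS, rfl⟩
    exact h S hS
  exact this hz

theorem bd_Sp {P Q : Finset (Fin r) → Prop} (h : ∀ S, P S → ∀ k ∈ S, Q (S.erase k))
    {z : Finset (Fin r) →₀ K} (hz : z ∈ Sp K P) : bd K z ∈ Sp K Q := by
  refine Sp_map _ _ (fun S hS => ?_) hz
  rw [bd_single]
  exact Submodule.sum_mem _ fun k hk => Submodule.smul_mem _ _ (single_mem (h S hS k hk))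

theorem wd_Sp {P Q : Finset (Fin r) → Prop} (e : Fin r)
    (h : ∀ S, P S → e ∉ S → Q (insert e S))
    {z : Finset (Fin r) →₀ K} (hz : z ∈ Sp K P) : wd e z ∈ Sp K Q := by
  refine Sp_map _ _ (fun S hS => ?_) hz
  rw [wd_single]
  split_ifs with he
  · exact Submodule.zero_mem _
  · exact Submodule.smul_mem _ _ (single_mem (h S hS he))

/-- vertex set covered by an edge set -/
def VV (vs : Fin r → Finset (Fin n)) (S : Finset (Fin r)) : Finset (Fin n) := S.biUnion vs

variable (vs : Fin r → Finset (Fin n))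

theorem VV_insert (e : Fin r) (S : Finset (Fin r)) : VV vs (insert e S) = vs e ∪ VV vs S := by
  simp [VV, Finset.biUnion_insert]

theorem VV_erase (e : Fin r) (S : Finset (Fin r)) : VV vs (S.erase e) ⊆ VV vs S :=
  Finset.biUnion_subset_biUnion_of_subset_left _ (Finset.erase_subset _ _)

theorem sub_VV {e : Fin r} {S : Finset (Fin r)} (h : e ∈ S) : vs e ⊆ VV vs S :=
  Finset.subset_biUnion_of_mem vs h

abbrev CC (K : Type) [Field K] (p : ℕ) (W : Finset (Fin n)) := Sp K (fun S => S.card = p ∧ VV vs S = W)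
abbrev NN (K : Type) [Field K] (W : Finset (Fin n)) := Sp K (fun S => VV vs S ⊂ W)

def Ex (K : Type) [Field K] (p : ℕ) (W : Finset (Fin n)) : Prop :=
  ∀ z ∈ CC vs K p W, bd K z ∈ NN vs K W → ∃ x ∈ CC vs K (p+1) W, z - bd K x ∈ NN vs K W

theorem bd_card {p : ℕ} {z : Finset (Fin r) →₀ K} (hz : z ∈ Sp K (fun S => S.card = p + 1)) :
    bd K z ∈ Sp K (fun S => S.card = p) :=
  bd_Sp (fun S hS k hk => by rw [Finset.card_erase_of_mem hk, hS]; rfl) hz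

theorem lemA {p : ℕ} {X : Finset (Fin n)} {c : Finset (Fin r) →₀ K}
    (hc : c ∈ Sp K (fun S => S.card = p)) (hb : bd K c = 0)
    (hX : c ∈ Sp K (fun S => ¬ X ⊂ VV vs S)) :
    c.filter (fun S => VV vs S = X) ∈ CC vs K p X ∧
      bd K (c.filter (fun S => VV vs S = X)) ∈ NN vs K X := by
  have h1 : c.filter (fun S => VV vs S = X) ∈ CC vs K p X := by
    refine mem_Sp.2 fun S hS => ?_
    rw [Finsupp.filter_apply]
    split_ifs with h
    · exact mem_Sp.1 hc S fun h' => hS ⟨h', h⟩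
    · rfl
  refine ⟨h1, ?_⟩
  have h2 : c - c.filter (fun S => VV vs S = X) ∈ Sp K (fun S => ¬ X ⊆ VV vs S) := by
    refine mem_Sp.2 fun S hS => ?_
    rw [Finsupp.sub_apply, Finsupp.filter_apply]
    split_ifs with h
    · simp
    · rw [sub_zero]
      refine mem_Sp.1 hX S fun h' => h' ?_
      exact (Finset.ssubset_iff_subset_ne.2 ⟨not_not.1 hS, fun h'' => h h''.symm⟩)
  have h3 : bd K (c - c.filter (fun S => VV vs S = X)) ∈ Sp K (fun S => ¬ X ⊆ VV vs S) :=
    bd_Sp (fun S hS k hk h' => hS (h'.trans (VV_erase vs k S))) h2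
  rw [map_sub, hb, zero_sub, Submodule.neg_mem_iff] at h3
  have h4 : bd K (c.filter (fun S => VV vs S = X)) ∈ Sp K (fun S => VV vs S ⊆ X) :=
    bd_Sp (fun S hS k hk => hS.2 ▸ VV_erase vs k S) h1
  exact Sp_mono (Sp_and h4 h3) fun S hS => ⟨hS.1, hS.2⟩

theorem M2 {p : ℕ} {W : Finset (Fin n)} {e : Fin r} {u v : Fin n} (huv : u ≠ v)
    (he : vs e = {u, v}) (hu : u ∈ W) (hv : v ∈ W)
    (Eu : Ex vs K p (W.erase u)) (Ev : Ex vs K p (W.erase v))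
    {z : Finset (Fin r) →₀ K} (hz : z ∈ CC vs K (p+1) W) (hbz : bd K z ∈ NN vs K W) :
    ∃ y ∈ CC vs K p ((W.erase u).erase v), bd K y ∈ NN vs K ((W.erase u).erase v) ∧
      ∃ x ∈ CC vs K (p+2) W, z - wd e y - bd K x ∈ NN vs K W := by
  have heW : vs e ⊆ W := by rw [he]; intro a; simp; rintro (rfl | rfl) <;> assumption
  set b := bd K z with hb
  have hbc : b ∈ Sp K (fun S => S.card = p) := bd_card (Sp_mono hz fun S h => h.1)
  have hbb : bd K b = 0 := bd_bd z
  have cu : (W.erase u).card + 1 = W.card := Finset.card_erase_add_one hu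
  have cv : (W.erase v).card + 1 = W.card := Finset.card_erase_add_one hv
  have huv' : W.erase u ≠ W.erase v := by
    intro h
    have : v ∈ W.erase u := Finset.mem_erase.2 ⟨huv.symm, hv⟩
    rw [h] at this; simp at this
  have step : ∀ w ∈ W, Ex vs K p (W.erase w) → ∃ x ∈ CC vs K (p+1) (W.erase w),
      b.filter (fun S => VV vs S = W.erase w) - bd K x ∈ NN vs K (W.erase w) := by
    intro w hw Ew
    obtain ⟨h1, h2⟩ := lemA vs (X := W.erase w) hbc hbb (Sp_mono hbz fun S hS hS' => by
      have := Finset.card_lt_card hS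
      have := Finset.card_lt_card hS'
      have := Finset.card_erase_add_one hw
      omega)
    exact Ew _ h1 h2
  obtain ⟨xu, hxu, hxu'⟩ := step u hu Eu
  obtain ⟨xv, hxv, hxv'⟩ := step v hv Ev
  have bdle : ∀ w ∈ W, ∀ x ∈ CC vs K (p+1) (W.erase w), bd K x ∈ NN vs K W := by
    intro w hw x hx
    refine bd_Sp (fun S hS k hk => ?_) hx
    have h1 : VV vs S ⊂ W := by rw [hS.2]; exact Finset.erase_ssubset hw
    exact lt_of_le_of_lt (VV_erase vs k S) h1
  set c := b - bd K xu - bd K xv with hc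
  have c1 : c ∈ Sp K (fun S => S.card = p) := by
    refine Submodule.sub_mem _ (Submodule.sub_mem _ hbc ?_) ?_
    · exact bd_card (Sp_mono hxu fun S h => h.1)
    · exact bd_card (Sp_mono hxv fun S h => h.1)
  have c2 : c ∈ NN vs K W :=
    Submodule.sub_mem _ (Submodule.sub_mem _ hbz (bdle u hu _ hxu)) (bdle v hv _ hxv)
  have c3 : bd K c = 0 := by rw [hc, map_sub, map_sub, hbb, bd_bd, bd_bd]; simp
  have c4 : c ∈ Sp K (fun S => VV vs S ≠ W.erase u ∧ VV vs S ≠ W.erase v) := by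
    have e1 : c = (b - b.filter (fun S => VV vs S = W.erase u)
        - b.filter (fun S => VV vs S = W.erase v))
        + (b.filter (fun S => VV vs S = W.erase u) - bd K xu)
        + (b.filter (fun S => VV vs S = W.erase v) - bd K xv) := by rw [hc]; abel
    rw [e1]
    refine Submodule.add_mem _ (Submodule.add_mem _ ?_ ?_) ?_
    · refine mem_Sp.2 fun S hS => ?_
      rw [Finsupp.sub_apply, Finsupp.sub_apply, Finsupp.filter_apply, Finsupp.filter_apply]
      by_cases h1 : VV vs S = W.erase u
      · rw [if_pos h1, if_neg (by rw [h1]; exact huv')]; simp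
      · by_cases h2 : VV vs S = W.erase v
        · rw [if_neg h1, if_pos h2]; simp
        · exact absurd ⟨h1, h2⟩ hS
    · refine Sp_mono hxu' fun S hS => ?_
      have := Finset.card_lt_card hS
      constructor <;> (intro h; rw [h] at this; omega)
    · refine Sp_mono hxv' fun S hS => ?_
      have := Finset.card_lt_card hS
      constructor <;> (intro h; rw [h] at this; omega)
  -- sets between
  have between : ∀ X : Finset (Fin n), (W.erase u).erase v ⊆ X → X ⊂ W → X ≠ W.erase u →
      X ≠ W.erase v → X = (W.erase u).erase v := by
    intro X h1 h2 h3 h4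
    have hmem : ∀ a ∈ W, a ≠ u → a ≠ v → a ∈ X := fun a ha hau hav => h1 (by simp [*])
    have hXW := h2.1
    by_cases hXu : u ∈ X
    · by_cases hXv : v ∈ X
      · exfalso; apply h2.2; intro a ha
        by_cases hau : a = u
        · rwa [hau]
        by_cases hav : a = v
        · rwa [hav]
        exact hmem a ha hau hav
      · exfalso; apply h4; ext a; simp only [Finset.mem_erase]
        constructor
        · intro ha; exact ⟨fun h => hXv (h ▸ ha), hXW ha⟩
        · rintro ⟨hav, ha⟩
          by_cases hau : a = u
          · rwa [hau]
          exact hmem a ha hau hav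
    · by_cases hXv : v ∈ X
      · exfalso; apply h3; ext a; simp only [Finset.mem_erase]
        constructor
        · intro ha; exact ⟨fun h => hXu (h ▸ ha), hXW ha⟩
        · rintro ⟨hau, ha⟩
          by_cases hav : a = v
          · rwa [hav]
          exact hmem a ha hau hav
      · refine Finset.Subset.antisymm ?_ h1
        intro a ha; simp only [Finset.mem_erase]
        exact ⟨fun h => hXv (h ▸ ha), fun h => hXu (h ▸ ha), hXW ha⟩
  set X := (W.erase u).erase v with hXdef
  obtain ⟨y1, y2⟩ := lemA vs (X := X) c1 c3 (Sp_mono (Sp_and c2 c4) fun S hS hS' => by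
    have := between _ hS'.1 hS.1 hS.2.1 hS.2.2
    rw [this] at hS'; exact hS'.ne rfl)
  set y := c.filter (fun S => VV vs S = X) with hy
  refine ⟨y, y1, y2, wd e (z - (xu + xv)), ?_, ?_⟩
  · rw [map_sub, map_add]
    refine Submodule.sub_mem _ ?_ (Submodule.add_mem _ ?_ ?_)
    · refine wd_Sp e (fun S hS heS => ?_) hz
      rw [Finset.card_insert_of_notMem heS, hS.1, VV_insert, hS.2]
      exact ⟨rfl, Finset.union_eq_right.2 heW⟩
    · refine wd_Sp e (fun S hS heS => ?_) hxu
      rw [Finset.card_insert_of_notMem heS, hS.1, VV_insert, hS.2, he]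
      refine ⟨rfl, ?_⟩
      ext a; simp; grind
    · refine wd_Sp e (fun S hS heS => ?_) hxv
      rw [Finset.card_insert_of_notMem heS, hS.1, VV_insert, hS.2, he]
      refine ⟨rfl, ?_⟩
      ext a; simp; grind
  · have e1 : z - wd e y - bd K (wd e (z - (xu + xv))) = wd e (c - y) + (xu + xv) := by
      have a1 := anti e (z - (xu + xv))
      have a2 : bd K (wd e (z - (xu + xv))) = z - (xu + xv) - wd e (bd K (z - (xu + xv))) :=
        eq_sub_of_add_eq a1
      have a3 : bd K (z - (xu + xv)) = c := by rw [hc, map_sub, map_add]; abel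
      rw [a2, a3, map_sub (wd e) c y]; abel
    rw [e1]
    refine Submodule.add_mem _ ?_ (Submodule.add_mem _ ?_ ?_)
    · have hcy : c - y ∈ Sp K (fun S => VV vs S ⊂ W ∧ ¬ X ⊆ VV vs S) := by
        refine mem_Sp.2 fun S hS => ?_
        rw [Finsupp.sub_apply, hy, Finsupp.filter_apply]
        split_ifs with h
        · simp
        · rw [sub_zero]
          refine mem_Sp.1 (Sp_and c2 c4) S fun h' => ?_
          refine hS ⟨h'.1, fun h'' => h (between _ h'' h'.1 h'.2.1 h'.2.2)⟩
      refine wd_Sp e (fun S hS heS => ?_) hcy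
      rw [VV_insert]
      refine ⟨Finset.union_subset heW hS.1.1, fun h => hS.2 fun a ha => ?_⟩
      have ha' := Finset.mem_erase.1 ha
      have ha'' := Finset.mem_erase.1 ha'.2
      have := h ha''.2
      rw [he] at this
      simp only [Finset.mem_union, Finset.mem_insert, Finset.mem_singleton] at this
      rcases this with (h|h)|h
      · exact absurd h ha''.1
      · exact absurd h ha'.1
      · exact h
    · exact Sp_mono hxu fun S hS => by rw [hS.2]; exact Finset.erase_ssubset hu
    · exact Sp_mono hxv fun S hS => by rw [hS.2]; exact Finset.erase_ssubset hv

theorem Ex_of_forall {p : ℕ} {W : Finset (Fin n)}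
    (h : ∀ S : Finset (Fin r), S.card = p → VV vs S ≠ W) : Ex vs K p W := by
  intro z hz _
  have : z = 0 := by
    ext S
    exact mem_Sp.1 hz S fun h' => h S h'.1 h'.2
  refine ⟨0, Submodule.zero_mem _, ?_⟩
  rw [this, map_zero, sub_zero]; exact Submodule.zero_mem _

theorem exists_of_not_Ex {p : ℕ} {W : Finset (Fin n)} (h : ¬ Ex vs K p W) :
    ∃ S : Finset (Fin r), S.card = p ∧ VV vs S = W := by
  by_contra hc
  push Not at hc
  exact h (Ex_of_forall vs hc)

theorem wd_CC {p : ℕ} {Y : Finset (Fin n)} {z : Finset (Fin r) →₀ K} (e : Fin r)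
    (hz : z ∈ CC vs K p Y) : wd e z ∈ CC vs K (p+1) (vs e ∪ Y) := by
  refine wd_Sp e (fun S hS heS => ?_) hz
  rw [Finset.card_insert_of_notMem heS, hS.1, VV_insert, hS.2]
  exact ⟨rfl, rfl⟩

theorem wd_A {A Y : Finset (Fin n)} {z : Finset (Fin r) →₀ K} (e : Fin r)
    (hz : z ∈ Sp K (fun S => ∃ T, T ⊂ Y ∧ VV vs S = A ∪ T)) :
    wd e z ∈ Sp K (fun S => ∃ T, T ⊂ Y ∧ VV vs S = (vs e ∪ A) ∪ T) := by
  refine wd_Sp e (fun S hS heS => ?_) hz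
  obtain ⟨T, h1, h2⟩ := hS
  exact ⟨T, h1, by rw [VV_insert, h2, Finset.union_assoc]⟩

theorem NN_A {Y : Finset (Fin n)} {z : Finset (Fin r) →₀ K} (hz : z ∈ NN vs K Y) :
    z ∈ Sp K (fun S => ∃ T, T ⊂ Y ∧ VV vs S = ∅ ∪ T) :=
  Sp_mono hz fun S hS => ⟨_, hS, by simp⟩

theorem A_NN {A Y W : Finset (Fin n)} {z : Finset (Fin r) →₀ K}
    (hz : z ∈ Sp K (fun S => ∃ T, T ⊂ Y ∧ VV vs S = A ∪ T)) (hA : A ⊆ W) (hY : Y ⊆ W)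
    (hd : ∀ a ∈ A, a ∉ Y) : z ∈ NN vs K W := by
  refine Sp_mono hz fun S hS => ?_
  obtain ⟨T, h1, h2⟩ := hS
  rw [h2]
  refine ⟨Finset.union_subset hA (h1.1.trans hY), fun h => h1.2 fun a ha => ?_⟩
  rcases Finset.mem_union.1 (h (hY ha)) with h3 | h3
  · exact absurd ha (hd a h3)
  · exact h3

theorem CC_NN {p : ℕ} {X W : Finset (Fin n)} {z : Finset (Fin r) →₀ K}
    (hz : z ∈ CC vs K p X) (h : X ⊂ W) : z ∈ NN vs K W :=
  Sp_mono hz fun S hS => by rw [hS.2]; exact h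

theorem M2_ex {p : ℕ} {W : Finset (Fin n)} {e : Fin r} {u v : Fin n} (huv : u ≠ v)
    (he : vs e = {u, v}) (hu : u ∈ W) (hv : v ∈ W)
    (Eu : Ex vs K p (W.erase u)) (Ev : Ex vs K p (W.erase v))
    (Euv : Ex vs K p ((W.erase u).erase v)) : Ex vs K (p+1) W := by
  intro z hz hbz
  obtain ⟨y, hy, hby, x, hx, hzx⟩ := M2 vs huv he hu hv Eu Ev hz hbz
  obtain ⟨x', hx', hyx⟩ := Euv y hy hby
  have hW : vs e ∪ (W.erase u).erase v = W := by rw [he]; ext a; simp; grind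
  have hX : (W.erase u).erase v ⊂ W :=
    lt_of_le_of_lt (Finset.erase_subset _ _) (Finset.erase_ssubset hu)
  refine ⟨x - wd e x', Submodule.sub_mem _ hx ?_, ?_⟩
  · have := wd_CC vs e hx'
    rwa [hW] at this
  · have a2 : bd K (wd e x') = x' - wd e (bd K x') := eq_sub_of_add_eq (anti e x')
    have : z - bd K (x - wd e x') = (z - wd e y - bd K x) + wd e (y - bd K x') + x' := by
      rw [map_sub, a2, map_sub (wd (K := K) e)]; abel
    rw [this]
    refine Submodule.add_mem _ (Submodule.add_mem _ hzx ?_) (CC_NN vs hx' hX)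
    refine A_NN vs (wd_A vs e (NN_A vs hyx)) ?_ hX.1 ?_
    · rw [he]; intro a; simp; rintro (rfl | rfl) <;> assumption
    · rw [he]; intro a; simp; grind

theorem path_ex {q : ℕ} {W : Finset (Fin n)} {e f : Fin r} {u v u' : Fin n}
    (hvs : ∀ k, ∃ a b, a ≠ b ∧ vs k = {a, b})
    (huv : u ≠ v) (huu' : u' ≠ u) (hvu' : u' ≠ v)
    (he : vs e = {u, v}) (hf : vs f = {v, u'}) (hu : u ∈ W) (hv : v ∈ W) (hu' : u' ∈ W)
    (Eu : Ex vs K (q+1) (W.erase u)) (Ev : Ex vs K (q+1) (W.erase v))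
    (E2 : ∀ w ∈ (W.erase u).erase v, Ex vs K q (((W.erase u).erase v).erase w)) :
    Ex vs K (q+2) W := by
  intro z hz hbz
  obtain ⟨y1, hy1, hby1, x, hx, hzx⟩ := M2 vs huv he hu hv Eu Ev hz hbz
  have hX : (W.erase u).erase v ⊂ W :=
    lt_of_le_of_lt (Finset.erase_subset _ _) (Finset.erase_ssubset hu)
  have hu'X : u' ∈ (W.erase u).erase v := by simp [*]
  have hW : vs e ∪ (W.erase u).erase v = W := by rw [he]; ext a; simp; grind
  have heW : vs e ⊆ W := by rw [← hW]; exact Finset.subset_union_left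
  set X := (W.erase u).erase v with hXd
  by_cases hex : ∃ e', u' ∈ vs e' ∧ vs e' ⊆ X
  · obtain ⟨e', h1, h2⟩ := hex
    obtain ⟨w, hw, he'⟩ : ∃ w, u' ≠ w ∧ vs e' = {u', w} := by
      obtain ⟨a, b, hab, hk⟩ := hvs e'
      rw [hk] at h1
      simp at h1
      rcases h1 with rfl | rfl
      · exact ⟨b, hab, hk⟩
      · exact ⟨a, hab.symm, by rw [hk, Finset.pair_comm]⟩
    have hwX : w ∈ X := h2 (by rw [he']; simp)
    obtain ⟨y, hy, hby, x2, hx2, hyx⟩ := M2 vs hw he' hu'X hwX (E2 _ hu'X) (E2 _ hwX) hy1 hby1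
    have hwu : w ≠ u ∧ w ≠ v ∧ w ∈ W := by
      rw [hXd] at hwX; simp at hwX; tauto
    set Y := (X.erase u').erase w with hYd
    have memY : ∀ a, a ∈ Y ↔ a ≠ w ∧ a ≠ u' ∧ a ≠ v ∧ a ≠ u ∧ a ∈ W := by
      intro a; rw [hYd, hXd]; simp
    refine ⟨x - wd e x2 - wd e (wd f (wd e' y)),
      Submodule.sub_mem _ (Submodule.sub_mem _ hx ?_) ?_, ?_⟩
    · have := wd_CC vs e hx2
      rwa [hW] at this
    · have := wd_CC vs e (wd_CC vs f (wd_CC vs e' hy))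
      have hh : vs e ∪ (vs f ∪ (vs e' ∪ Y)) = W := by
        rw [he, hf, he']; ext a; simp [memY]; grind
      rwa [hh] at this
    · have a1 : bd K (wd e x2) = x2 - wd e (bd K x2) := eq_sub_of_add_eq (anti e x2)
      have a2 : bd K (wd e (wd f (wd e' y))) = wd f (wd e' y) - wd e (bd K (wd f (wd e' y))) :=
        eq_sub_of_add_eq (anti e _)
      have a3 : bd K (wd f (wd e' y)) = wd e' y - wd f (bd K (wd e' y)) :=
        eq_sub_of_add_eq (anti f _)
      have a4 : bd K (wd e' y) = y - wd e' (bd K y) :=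
        eq_sub_of_add_eq (anti e' _)
      have : z - bd K (x - wd e x2 - wd e (wd f (wd e' y))) =
          (z - wd e y1 - bd K x) + wd e (y1 - wd e' y - bd K x2) + x2 + wd f (wd e' y)
            + wd e (wd f y) - wd e (wd f (wd e' (bd K y))) := by
        rw [map_sub (bd K), map_sub (bd K), a2, a3, a4, a1]
        simp only [map_sub]
        abel
      rw [this]
      refine Submodule.sub_mem _ (Submodule.add_mem _ (Submodule.add_mem _ (Submodule.add_mem _
        (Submodule.add_mem _ hzx ?_) (CC_NN vs hx2 hX)) ?_) ?_) ?_
      · refine A_NN vs (wd_A vs e (NN_A vs hyx)) (by simpa using heW) hX.1 ?_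
        rw [he]; intro a; simp [hXd]; grind
      · refine CC_NN vs (wd_CC vs f (wd_CC vs e' hy)) ?_
        rw [hf, he']
        refine ⟨?_, fun h => ?_⟩
        · intro a; simp [memY]; grind
        · have := h hu; simp [memY] at this; grind
      · refine CC_NN vs (wd_CC vs e (wd_CC vs f hy)) ?_
        rw [hf, he]
        refine ⟨?_, fun h => ?_⟩
        · intro a; simp [memY]; grind
        · have := h hwu.2.2; simp [memY] at this; grind
      · refine A_NN vs (wd_A vs e (wd_A vs f (wd_A vs e' (NN_A vs hby)))) ?_ ?_ ?_
        · rw [he, hf, he']; intro a; simp; grind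
        · intro a; simp [memY]
        · rw [he, hf, he']; intro a; simp [memY]; grind
  · have hy0 : y1 = 0 := by
      ext S
      refine mem_Sp.1 hy1 S fun h' => hex ?_
      rw [← h'.2] at hu'X
      obtain ⟨k, hk, hk'⟩ := Finset.mem_biUnion.1 hu'X
      exact ⟨k, hk', h'.2 ▸ sub_VV vs hk⟩
    refine ⟨x, hx, ?_⟩
    rw [hy0, map_zero, sub_zero] at hzx
    exact hzx

/-- edges inside `W` are pairwise disjoint -/
def Uq (W : Finset (Fin n)) : Prop :=
  ∀ a k k', a ∈ vs k → vs k ⊆ W → a ∈ vs k' → vs k' ⊆ W → k = k'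

theorem Uq_sub {W : Finset (Fin n)} (hU : Uq vs W) (hvs : ∀ k, ∃ a b, a ≠ b ∧ vs k = {a, b})
    {M : Finset (Fin r)} (hM : VV vs M = W) {k : Fin r} (hk : vs k ⊆ W) : k ∈ M := by
  obtain ⟨a, b, hab, hkk⟩ := hvs k
  have ha : a ∈ vs k := by rw [hkk]; simp
  have haW := hk ha
  rw [← hM] at haW
  obtain ⟨k', hk', ha'⟩ := Finset.mem_biUnion.1 haW
  rw [hU a k k' ha hk ha' (hM ▸ sub_VV vs hk')]
  exact hk'

theorem not_Ex_matching {W : Finset (Fin n)} (hU : Uq vs W)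
    (hvs : ∀ k, ∃ a b, a ≠ b ∧ vs k = {a, b}) {M : Finset (Fin r)} (hM : VV vs M = W) :
    ¬ Ex vs K M.card W := by
  intro hE
  have huniq : ∀ S, VV vs S = W → S ⊆ M := fun S hS k hk =>
    Uq_sub vs hU hvs hM (hS ▸ sub_VV vs hk)
  obtain ⟨x, hx, hzx⟩ := hE (Finsupp.single M 1) (single_mem ⟨rfl, hM⟩) (by
    refine bd_Sp (P := fun S => S = M) (fun S hS k hk => ?_) (single_mem rfl)
    subst hS
    refine ⟨hM ▸ VV_erase vs k S, fun h => ?_⟩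
    have h1 : VV vs (S.erase k) = W := Finset.Subset.antisymm (hM ▸ VV_erase vs k S) h
    have := Uq_sub vs hU hvs h1 (hM ▸ sub_VV vs hk)
    simp at this)
  have hx0 : x = 0 := by
    ext S
    refine mem_Sp.1 hx S fun h' => ?_
    have := Finset.card_le_card (huniq S h'.2)
    omega
  rw [hx0, map_zero, sub_zero] at hzx
  have := mem_Sp.1 hzx M (by rw [hM]; exact fun h => h.ne rfl)
  simp at this

theorem not_Ex_extend {W : Finset (Fin n)} (hU : Uq vs W)
    (hvs : ∀ k, ∃ a b, a ≠ b ∧ vs k = {a, b}) {M : Finset (Fin r)} (hM : VV vs M = W)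
    {v v' : Fin n} {e : Fin r} (he : vs e = {v, v'}) (hv : v ∉ W) (hv' : v' ∈ W) :
    ¬ Ex vs K (M.card + 1) (insert v W) := by
  intro hE
  have heM : e ∉ M := fun h => hv (hM ▸ sub_VV vs h (by rw [he]; simp))
  have a1 : bd K (wd e (Finsupp.single M 1)) =
      Finsupp.single M 1 - wd e (bd K (Finsupp.single M 1)) := eq_sub_of_add_eq (anti e _)
  have hsM : Finsupp.single M (1 : K) ∈ CC vs K M.card W := single_mem ⟨rfl, hM⟩
  have hb : bd K (Finsupp.single M 1) ∈ Sp K (fun S => ∃ k ∈ M, S = M.erase k) :=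
    bd_Sp (P := fun S => S = M) (fun S hS k hk => by subst hS; exact ⟨k, hk, rfl⟩)
      (single_mem rfl)
  have hz : wd e (Finsupp.single M 1) ∈ CC vs K (M.card+1) (insert v W) := by
    have := wd_CC vs e hsM
    have hh : vs e ∪ W = insert v W := by rw [he]; ext a; simp; grind
    rwa [hh] at this
  obtain ⟨x, hx, hzx⟩ := hE (wd e (Finsupp.single M 1)) hz (by
    rw [a1]
    refine Submodule.sub_mem _ (CC_NN vs hsM (Finset.ssubset_insert hv)) ?_
    refine wd_Sp e (fun S hS heS => ?_) hb
    obtain ⟨k, hk, rfl⟩ := hS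
    have hkW : vs k ⊆ W := hM ▸ sub_VV vs hk
    obtain ⟨a, ha, hav'⟩ : ∃ a ∈ vs k, a ≠ v' := by
      obtain ⟨a, b, hab, hkk⟩ := hvs k
      by_cases h : a = v'
      · exact ⟨b, by rw [hkk]; simp, fun h' => hab (h.trans h'.symm)⟩
      · exact ⟨a, by rw [hkk]; simp, h⟩
    rw [VV_insert]
    refine ⟨?_, fun h => ?_⟩
    · refine Finset.union_subset ?_ ?_
      · rw [he]; intro a; simp; grind
      · exact (VV_erase vs k M).trans (hM ▸ Finset.subset_insert _ _)
    · have h1 := h (Finset.mem_insert_of_mem (hkW ha))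
      rcases Finset.mem_union.1 h1 with h2 | h2
      · rw [he] at h2; simp at h2
        rcases h2 with rfl | rfl
        · exact hv (hkW ha)
        · exact hav' rfl
      · obtain ⟨k', hk', ha'⟩ := Finset.mem_biUnion.1 h2
        have hk'' := Finset.mem_erase.1 hk'
        exact hk''.1 (hU a k' k ha' (hM ▸ sub_VV vs hk''.2) ha hkW))
  have h0 : bd K (wd e (Finsupp.single M 1) - bd K x) ∈ Sp K (fun S => S ≠ M) := by
    refine bd_Sp (fun S hS k hk hSk => ?_) hzx
    have hSi : S = insert k M := by rw [← hSk, Finset.insert_erase hk]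
    have hkM : k ∉ M := by rw [← hSk]; simp
    rw [hSi, VV_insert, hM] at hS
    by_cases hvk : v ∈ vs k
    · apply hS.2; intro a ha; rcases Finset.mem_insert.1 ha with rfl | ha
      · exact Finset.mem_union_left _ hvk
      · exact Finset.mem_union_right _ ha
    · refine hkM (Uq_sub vs hU hvs hM fun a ha => ?_)
      rcases Finset.mem_insert.1 (hS.1 (Finset.mem_union_left _ ha)) with rfl | h
      · exact absurd ha hvk
      · exact h
  have h1 := mem_Sp.1 h0 M (by simp)
  rw [map_sub, bd_bd, sub_zero, a1, Finsupp.sub_apply] at h1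
  have h2 : wd e (bd K (Finsupp.single M 1)) ∈ Sp K (fun S => S ≠ M) :=
    wd_Sp (P := fun S => True) (Q := fun S => S ≠ M) e (fun S _ _ h => heM (h ▸ Finset.mem_insert_self e S))
      (Sp_mono hb fun _ _ => trivial)
  rw [mem_Sp.1 h2 M (by simp)] at h1
  simp at h1

theorem Uq_card {W : Finset (Fin n)} (hU : Uq vs W)
    (hvs : ∀ k, ∃ a b, a ≠ b ∧ vs k = {a, b}) {M : Finset (Fin r)} (hM : VV vs M = W) :
    W.card = 2 * M.card := by
  rw [← hM, VV, Finset.card_biUnion]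
  · rw [Finset.sum_congr rfl (g := fun _ => 2)]
    · simp [mul_comm]
    · intro k _
      obtain ⟨a, b, hab, hkk⟩ := hvs k
      rw [hkk, Finset.card_pair hab]
  · intro k hk k' hk' hkk'
    show Disjoint (vs k) (vs k')
    rw [Finset.disjoint_left]
    intro a ha ha'
    exact hkk' (hU a k k' ha (hM ▸ sub_VV vs hk) ha' (hM ▸ sub_VV vs hk'))

theorem Ex_step {p : ℕ} {W : Finset (Fin n)} (hvs : ∀ k, ∃ a b, a ≠ b ∧ vs k = {a, b})
    (h : ¬ Ex vs K (p+1) W) : ∃ W', ¬ Ex vs K p W' ∧ W.card ≤ W'.card + 2 := by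
  obtain ⟨S, hS, hSW⟩ := exists_of_not_Ex vs h
  obtain ⟨e, heS⟩ : S.Nonempty := Finset.card_pos.1 (by omega)
  obtain ⟨u, v, huv, he⟩ := hvs e
  have heW : vs e ⊆ W := hSW ▸ sub_VV vs heS
  have hu : u ∈ W := heW (by rw [he]; simp)
  have hv : v ∈ W := heW (by rw [he]; simp)
  have cu : (W.erase u).card + 1 = W.card := Finset.card_erase_add_one hu
  have cv : (W.erase v).card + 1 = W.card := Finset.card_erase_add_one hv
  have cuv : ((W.erase u).erase v).card + 1 = (W.erase u).card :=
    Finset.card_erase_add_one (Finset.mem_erase.2 ⟨huv.symm, hv⟩)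
  by_contra hc
  push Not at hc
  refine h (M2_ex vs huv he hu hv ?_ ?_ ?_) <;> by_contra hE <;> have := hc _ hE <;> omega

theorem Ex_one {W : Finset (Fin n)} (hvs : ∀ k, ∃ a b, a ≠ b ∧ vs k = {a, b})
    (h : ¬ Ex vs K 1 W) : W.card ≤ 2 := by
  obtain ⟨W', h1, h2⟩ := Ex_step vs hvs h
  obtain ⟨S, hS, hSW⟩ := exists_of_not_Ex vs h1
  rw [Finset.card_eq_zero] at hS
  subst hS
  simp [VV] at hSW
  subst hSW
  simpa using h2

theorem main_comb {t : ℕ} {W : Finset (Fin n)} (hvs : ∀ k, ∃ a b, a ≠ b ∧ vs k = {a, b})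
    (hinj : Function.Injective vs)
    (h1 : ∀ W, ¬ Ex vs K t W → W.card ≤ t + 1)
    (h3 : ∀ W, Ex vs K (t+3) W) (hiso : ∀ v, ∃ k, v ∈ vs k)
    (hW : ¬ Ex vs K (t+2) W) (hc : W.card = t + 5) :
    W = Finset.univ ∧ n = 6 ∧ Uq vs Finset.univ := by
  have h2 : ∀ W, ¬ Ex vs K (t+1) W → W.card ≤ t + 3 := by
    intro W hW
    obtain ⟨W', h4, h5⟩ := Ex_step vs hvs hW
    have := h1 _ h4
    omega
  have other : ∀ a k, a ∈ vs k → ∃ b, b ≠ a ∧ vs k = {b, a} := by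
    intro a k ha
    obtain ⟨c, d, hcd, hk⟩ := hvs k
    rw [hk] at ha; simp at ha
    rcases ha with rfl | rfl
    · exact ⟨d, hcd.symm, by rw [hk, Finset.pair_comm]⟩
    · exact ⟨c, hcd, hk⟩
  have hU : Uq vs W := by
    intro v e f hve heW hvf hfW
    by_contra hef
    obtain ⟨u, huv, he⟩ := other v e hve
    obtain ⟨u', hu'v, hf⟩ := other v f hvf
    have huu' : u' ≠ u := by
      rintro rfl; exact hef (hinj (he.trans hf.symm))
    have hu : u ∈ W := heW (by rw [he]; simp)
    have hv : v ∈ W := heW (by rw [he]; simp)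
    have hu' : u' ∈ W := hfW (by rw [hf]; simp)
    have cu : (W.erase u).card + 1 = W.card := Finset.card_erase_add_one hu
    have cv : (W.erase v).card + 1 = W.card := Finset.card_erase_add_one hv
    have cuv : ((W.erase u).erase v).card + 1 = (W.erase u).card :=
      Finset.card_erase_add_one (Finset.mem_erase.2 ⟨huv.symm, hv⟩)
    refine hW (path_ex vs (q := t) hvs huv huu' hu'v he (hf.trans (Finset.pair_comm _ _))
      hu hv hu' ?_ ?_ ?_)
    · by_contra hE; have := h2 _ hE; omega
    · by_contra hE; have := h2 _ hE; omega
    · intro w hw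
      have := Finset.card_erase_add_one hw
      by_contra hE; have := h1 _ hE; omega
  obtain ⟨M, hMc, hM⟩ := exists_of_not_Ex vs hW
  have hcard := Uq_card vs hU hvs hM
  have ht : t = 1 := by omega
  subst ht
  have noadj : ∀ v k v', v ∉ W → vs k = {v, v'} → v' ∉ W := by
    intro v k v' hv hk hv'
    have := not_Ex_extend (K := K) vs hU hvs hM hk hv hv'
    rw [hMc] at this
    exact this (h3 _)
  have hWu : W = Finset.univ := by
    by_contra hne
    obtain ⟨v, hv⟩ : ∃ v, v ∉ W := by
      by_contra h; push Not at h; exact hne (Finset.eq_univ_iff_forall.2 h)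
    obtain ⟨k, hk⟩ := hiso v
    obtain ⟨w, hwv, hkw⟩ := other v k hk
    have hkv : vs k = {v, w} := hkw.trans (Finset.pair_comm _ _)
    have hw : w ∉ W := noadj v k w hv hkv
    have hU' : Uq vs (insert v (insert w W)) := by
      have main : ∀ l, vs l ⊆ insert v (insert w W) → vs l ⊆ W ∨ l = k := by
        intro l hl
        obtain ⟨a, b, hab, hlab⟩ := hvs l
        have ha : a ∈ insert v (insert w W) := hl (by rw [hlab]; simp)
        have hb : b ∈ insert v (insert w W) := hl (by rw [hlab]; simp)
        have hba : vs l = {b, a} := hlab.trans (Finset.pair_comm _ _)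
        have n1 := noadj a l b
        have n2 := noadj b l a
        by_cases haW : a ∈ W
        · left
          have hbW : b ∈ W := by by_contra h; exact n2 h hba haW
          rw [hlab]; intro c; simp; rintro (rfl | rfl) <;> assumption
        · right
          have hbW : b ∉ W := n1 haW hlab
          apply hinj
          rw [hlab, hkv]
          simp only [Finset.mem_insert, haW, hbW, or_false] at ha hb
          rcases ha with rfl | rfl <;> rcases hb with rfl | rfl
          · exact absurd rfl hab
          · rfl
          · exact Finset.pair_comm _ _
          · exact absurd rfl hab
      intro a l l' hal hl hal' hl'
      rcases main l hl with h | h <;> rcases main l' hl' with h' | h'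
      · exact hU a l l' hal h hal' h'
      · subst h'; rw [hkv] at hal'; simp at hal'
        rcases hal' with rfl | rfl
        · exact absurd (h hal) hv
        · exact absurd (h hal) hw
      · subst h; rw [hkv] at hal; simp at hal
        rcases hal with rfl | rfl
        · exact absurd (h' hal') hv
        · exact absurd (h' hal') hw
      · rw [h, h']
    have hkM : k ∉ M := fun h => hv (hM ▸ sub_VV vs h hk)
    have := not_Ex_matching (K := K) vs hU' hvs (M := insert k M) (by
      rw [VV_insert, hM, hkv]; ext a; simp)
    rw [Finset.card_insert_of_notMem hkM, hMc] at this
    exact this (h3 _)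
  refine ⟨hWu, ?_, hWu ▸ hU⟩
  rw [hWu] at hc
  simpa using hc

/-! bridge -/

open EP

theorem mlcm_eq {g : Fin r → (Fin n → ℕ)} (hg : ∀ k x, g k x = if x ∈ vs k then 1 else 0)
    (S : Finset (Fin r)) (x : Fin n) : mlcm g S x = if x ∈ VV vs S then 1 else 0 := by
  rw [mlcm]
  split_ifs with h
  · obtain ⟨k, hk, hx⟩ := Finset.mem_biUnion.1 h
    apply le_antisymm
    · refine Finset.sup_le fun j _ => ?_
      rw [hg]; split_ifs <;> simp
    · have := Finset.le_sup (f := fun k => g k x) hk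
      rw [hg, if_pos hx] at this; exact this
  · rw [← Nat.bot_eq_zero, Finset.sup_eq_bot_iff]
    intro k hk
    rw [hg, if_neg (fun h' => h (sub_VV vs hk h'))]; rfl

theorem mlcm_eq_iff {g : Fin r → (Fin n → ℕ)} (hg : ∀ k x, g k x = if x ∈ vs k then 1 else 0)
    (S T : Finset (Fin r)) : mlcm g S = mlcm g T ↔ VV vs S = VV vs T := by
  constructor
  · intro h; ext x
    have := congrFun h x
    rw [mlcm_eq vs hg, mlcm_eq vs hg] at this
    by_cases h1 : x ∈ VV vs S <;> by_cases h2 : x ∈ VV vs T <;> simp_all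
  · intro h; ext x
    rw [mlcm_eq vs hg, mlcm_eq vs hg, h]

theorem strand_eq {g : Fin r → (Fin n → ℕ)} (hg : ∀ k x, g k x = if x ∈ vs k then 1 else 0)
    (p j : ℕ) : strand K g p j = Sp K (fun S => S.card = p ∧ (VV vs S).card = j) := by
  have hs : ∀ S, ∑ x, mlcm g S x = (VV vs S).card := by
    intro S
    simp [mlcm_eq vs hg]
  rw [strand, Sp, Finsupp.supported_eq_span_single]
  congr 1
  ext c
  simp only [Set.mem_ofPred_eq, Set.mem_image, hs]
  constructor
  · rintro ⟨S, h1, h2, rfl⟩; exact ⟨S, ⟨h1, h2⟩, rfl⟩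
  · rintro ⟨S, ⟨h1, h2⟩, rfl⟩; exact ⟨S, h1, h2, rfl⟩

theorem bdT_single (g : Fin r → (Fin n → ℕ)) (S : Finset (Fin r)) :
    bdT K g (Finsupp.single S 1) = ∑ k ∈ S, if mlcm g (S.erase k) = mlcm g S
      then sgn K k S • Finsupp.single (S.erase k) (1 : K) else 0 := by
  simp [bdT, sgn]

theorem bdT_Sp {g : Fin r → (Fin n → ℕ)} (hg : ∀ k x, g k x = if x ∈ vs k then 1 else 0)
    (Q : Finset (Fin n) → Prop) {z : Finset (Fin r) →₀ K} (hz : z ∈ Sp K (fun S => Q (VV vs S))) :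
    bdT K g z ∈ Sp K (fun S => Q (VV vs S)) := by
  refine Sp_map _ _ (fun S hS => ?_) hz
  rw [bdT_single]
  refine Submodule.sum_mem _ fun k hk => ?_
  split_ifs with h
  · refine Submodule.smul_mem _ _ (single_mem ?_)
    rw [(mlcm_eq_iff vs hg _ _).1 h]; exact hS
  · exact Submodule.zero_mem _

theorem bdT_sub {g : Fin r → (Fin n → ℕ)} (hg : ∀ k x, g k x = if x ∈ vs k then 1 else 0)
    {W : Finset (Fin n)} {z : Finset (Fin r) →₀ K} (hz : z ∈ Sp K (fun S => VV vs S = W)) :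
    bd K z - bdT K g z ∈ NN vs K W := by
  refine Sp_map (bd K - bdT K g) _ (fun S hS => ?_) hz
  rw [LinearMap.sub_apply, bdT_single, bd_single, ← Finset.sum_sub_distrib]
  refine Submodule.sum_mem _ fun k hk => ?_
  split_ifs with h
  · rw [sub_self]; exact Submodule.zero_mem _
  · rw [sub_zero]
    refine Submodule.smul_mem _ _ (single_mem ?_)
    rw [mlcm_eq_iff vs hg] at h
    rw [← hS]
    exact Finset.ssubset_iff_subset_ne.2 ⟨VV_erase vs k S, h⟩

theorem Sp_zero {P Q : Finset (Fin r) → Prop} {z : Finset (Fin r) →₀ K} (hz : z ∈ Sp K P)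
    (hz' : z ∈ Sp K Q) (h : ∀ S, P S → ¬ Q S) : z = 0 := by
  ext S
  by_cases hP : P S
  · exact mem_Sp.1 hz' S (h S hP)
  · exact mem_Sp.1 hz S hP

theorem filt_mem {P : Finset (Fin r) → Prop} {z : Finset (Fin r) →₀ K} (hz : z ∈ Sp K P)
    (W : Finset (Fin n)) :
    z.filter (fun S => VV vs S = W) ∈ Sp K (fun S => P S ∧ VV vs S = W) := by
  refine mem_Sp.2 fun S hS => ?_
  rw [Finsupp.filter_apply]
  split_ifs with h
  · exact mem_Sp.1 hz S fun h' => hS ⟨h', h⟩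
  · rfl

theorem filt_compl (z : Finset (Fin r) →₀ K) (W : Finset (Fin n)) :
    z - z.filter (fun S => VV vs S = W) ∈ Sp K (fun S => VV vs S ≠ W) := by
  refine mem_Sp.2 fun S hS => ?_
  rw [Finsupp.sub_apply, Finsupp.filter_apply, if_pos (not_not.1 hS), sub_self]

theorem torRank_iff {g : Fin r → (Fin n → ℕ)} (hg : ∀ k x, g k x = if x ∈ vs k then 1 else 0)
    (p j : ℕ) : torRank K g p j = 0 ↔ ∀ W : Finset (Fin n), W.card = j → Ex vs K p W := by
  have h0 : torRank K g p j = 0 ↔ strand K g p j ⊓ LinearMap.ker (bdT K g) ≤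
      Submodule.map (bdT K g) (strand K g (p+1) j) := by
    rw [torRank, Nat.sub_eq_zero_iff_le]
    constructor
    · intro h
      have := Submodule.eq_of_le_of_finrank_le inf_le_right h
      rw [← this]; exact inf_le_left
    · intro h
      rw [inf_eq_right.2 h]
  rw [h0, strand_eq vs hg, strand_eq vs hg]
  have nn : ∀ (W : Finset (Fin n)) (z : Finset (Fin r) →₀ K), z ∈ NN vs K W →
      z ∈ Sp K (fun S => VV vs S = W) → z = 0 := fun W z h1 h2 =>
    Sp_zero h1 h2 fun S h h' => h.ne h'
  constructor
  · intro h W hW z hz hbz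
    have hz1 : z ∈ Sp K (fun S => VV vs S = W) := Sp_mono hz fun S hS => hS.2
    have hTz : bdT K g z = 0 := by
      refine nn W _ ?_ (bdT_Sp vs hg (fun X => X = W) hz1)
      have := Submodule.sub_mem _ hbz (bdT_sub vs hg hz1)
      rwa [sub_sub_cancel] at this
    obtain ⟨x', hx', hxz⟩ := h ⟨Sp_mono hz fun S hS => ⟨hS.1, by rw [hS.2, hW]⟩, hTz⟩
    have hx := filt_mem vs hx' W
    have hx1 : x'.filter (fun S => VV vs S = W) ∈ Sp K (fun S => VV vs S = W) :=
      Sp_mono hx fun S hS => hS.2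
    refine ⟨x'.filter (fun S => VV vs S = W), Sp_mono hx fun S hS => ⟨hS.1.1, hS.2⟩, ?_⟩
    have hr := bdT_Sp vs hg (fun X => X ≠ W) (filt_compl vs x' W)
    rw [map_sub, hxz] at hr
    have h2 := Submodule.sub_mem _ hz1 (bdT_Sp vs hg (fun X => X = W) hx1)
    have h3 := Sp_zero hr h2 fun S h h' => h h'
    rw [sub_eq_zero] at h3
    rw [h3, ← neg_sub]
    exact Submodule.neg_mem _ (bdT_sub vs hg hx1)
  · rintro h z ⟨hz, hTz⟩
    replace hTz : bdT K g z = 0 := hTz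
    have hsum : z = ∑ W : Finset (Fin n), z.filter (fun S => VV vs S = W) := by
      ext S
      rw [Finsupp.finset_sum_apply]
      simp [Finsupp.filter_apply]
    rw [hsum]
    refine Submodule.sum_mem _ fun W _ => ?_
    have hx := filt_mem vs hz W
    set y := z.filter (fun S => VV vs S = W) with hy
    have hy1 : y ∈ Sp K (fun S => VV vs S = W) := Sp_mono hx fun S hS => hS.2
    have hTy : bdT K g y = 0 := by
      have hr := bdT_Sp vs hg (fun X => X ≠ W) (filt_compl vs z W)
      rw [map_sub, hTz, zero_sub, Submodule.neg_mem_iff] at hr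
      exact Sp_zero hr (bdT_Sp vs hg (fun X => X = W) hy1) fun S h h' => h h'
    by_cases hW : W.card = j
    · have hby := bdT_sub vs hg hy1
      rw [hTy, sub_zero] at hby
      obtain ⟨x, hx1, hx2⟩ := h W hW y (Sp_mono hx fun S hS => ⟨hS.1.1, hS.2⟩) hby
      have hx3 : x ∈ Sp K (fun S => VV vs S = W) := Sp_mono hx1 fun S hS => hS.2
      refine ⟨x, Sp_mono hx1 fun S hS => ⟨hS.1, by rw [hS.2, hW]⟩, ?_⟩
      have h4 := nn W _ (Submodule.add_mem _ hx2 (bdT_sub vs hg hx3)) (by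
        rw [sub_add_sub_cancel]
        exact Submodule.sub_mem _ hy1 (bdT_Sp vs hg (fun X => X = W) hx3))
      rw [sub_add_sub_cancel, sub_eq_zero] at h4
      exact h4.symm
    · have : y = 0 := Sp_zero (P := fun S => (VV vs S).card = j) (Sp_mono hx fun S hS => hS.1.2) hy1
        fun S h1 h2 => hW (h2 ▸ h1)
      rw [this]; exact Submodule.zero_mem _

end chains

section graph

variable {n : ℕ}

open EP

/-- vertices of the `k`-th edge -/
noncomputable def vsG (G : SimpleGraph (Fin n)) (k : Fin (edgeFins G).card) : Finset (Fin n) :=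
  Finset.univ.filter fun x => x ∈ ((edgeFins G).equivFin.symm k : Sym2 (Fin n))

theorem vsG_gens (G : SimpleGraph (Fin n)) (k : Fin (edgeFins G).card) (x : Fin n) :
    edgeGens G k x = if x ∈ vsG G k then 1 else 0 := by
  simp [edgeGens, vsG]

theorem mem_edgeFins (G : SimpleGraph (Fin n)) (e : Sym2 (Fin n)) :
    e ∈ edgeFins G ↔ e ∈ G.edgeSet := by
  simp [edgeFins]

theorem vsG_edge (G : SimpleGraph (Fin n)) (k : Fin (edgeFins G).card) :
    ∃ a b, G.Adj a b ∧ vsG G k = {a, b} := by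
  have h := ((edgeFins G).equivFin.symm k).2
  rw [mem_edgeFins] at h
  rw [vsG]
  generalize (((edgeFins G).equivFin.symm k : edgeFins G) : Sym2 (Fin n)) = e at h
  induction e using Sym2.ind with
  | _ a b =>
    refine ⟨a, b, h, ?_⟩
    ext x; simp

theorem vsG_two (G : SimpleGraph (Fin n)) (k : Fin (edgeFins G).card) :
    ∃ a b, a ≠ b ∧ vsG G k = {a, b} := by
  obtain ⟨a, b, h, h'⟩ := vsG_edge G k
  exact ⟨a, b, h.ne, h'⟩

theorem vsG_adj (G : SimpleGraph (Fin n)) {a b : Fin n} (h : G.Adj a b) :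
    ∃ k, vsG G k = {a, b} := by
  refine ⟨(edgeFins G).equivFin ⟨s(a, b), (mem_edgeFins G _).2 h⟩, ?_⟩
  ext x; simp [vsG]

theorem vsG_inj (G : SimpleGraph (Fin n)) : Function.Injective (vsG G) := by
  intro k k' h
  apply (edgeFins G).equivFin.symm.injective
  apply Subtype.ext
  apply Sym2.ext
  intro x
  have := Finset.ext_iff.1 h x
  simpa [vsG] using this

theorem adj_of_vsG (G : SimpleGraph (Fin n)) {a b : Fin n} {k} (hab : a ≠ b) (ha : a ∈ vsG G k)
    (hb : b ∈ vsG G k) : G.Adj a b := by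
  obtain ⟨c, d, h, h'⟩ := vsG_edge G k
  rw [h'] at ha hb
  simp at ha hb
  rcases ha with rfl | rfl <;> rcases hb with rfl | rfl
  · exact absurd rfl hab
  · exact h
  · exact h.symm
  · exact absurd rfl hab

theorem gBetti_iff (K : Type) [Field K] (G : SimpleGraph (Fin n)) (i j : ℕ) :
    gBetti K G i j = 0 ↔ ∀ W : Finset (Fin n), W.card = j → Ex (vsG G) K (i+1) W :=
  torRank_iff (vsG G) (vsG_gens G) (i+1) j

theorem Gd1_adj (i j : Fin 6) : Gd1.Adj i j ↔ i ≠ j ∧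
    ¬ ((i = 0 ∧ j = 2) ∨ (i = 2 ∧ j = 0) ∨ (i = 1 ∧ j = 3) ∨ (i = 3 ∧ j = 1) ∨
      (i = 4 ∧ j = 5) ∨ (i = 5 ∧ j = 4)) := by
  rw [Gd1, SimpleGraph.fromRel_adj]
  revert i j; decide

/-- if every vertex has a unique neighbour and there are six vertices, we get the dipyramid -/
theorem iso_of_matching (G : SimpleGraph (Fin n)) (hn : n = 6)
    (h : ∀ v, ∃ w, G.Adj v w) (hu : ∀ v w w', G.Adj v w → G.Adj v w' → w = w') :
    Nonempty (Gᶜ ≃g Gd1) := by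
  subst hn
  choose m hm using h
  have hadj : ∀ v w, G.Adj v w ↔ w = m v := fun v w =>
    ⟨fun h => hu v w (m v) h (hm v), fun h => h ▸ hm v⟩
  have hmm : ∀ v, m (m v) = v := fun v => ((hadj (m v) v).1 (hm v).symm).symm
  have hne : ∀ v, m v ≠ v := fun v => (hm v).ne'
  have hinj : ∀ v w, m v = m w → v = w := fun v w h => by rw [← hmm v, h, hmm]
  have ex : ∀ s : Finset (Fin 6), s.card < 6 → ∃ c, c ∉ s := by
    intro s hs
    by_contra hc
    push Not at hc
    rw [Finset.eq_univ_iff_forall.2 hc] at hs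
    simp at hs
  let a : Fin 6 := 0
  obtain ⟨c, hc⟩ := ex {a, m a} (lt_of_le_of_lt Finset.card_le_two (by norm_num))
  obtain ⟨e, he⟩ := ex {a, m a, c, m c} (lt_of_le_of_lt Finset.card_le_four (by norm_num))
  simp only [Finset.mem_insert, Finset.mem_singleton, not_or] at hc he
  have d1 := hne a
  have d2 := hne c
  have d3 := hne e
  have d4 : m c ≠ a := fun h => hc.2 (by rw [← h, hmm])
  have d5 : m c ≠ m a := fun h => hc.1 (hinj _ _ h)
  have d6 : m e ≠ a := fun h => he.2.1 (by rw [← h, hmm])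
  have d7 : m e ≠ m a := fun h => he.1 (hinj _ _ h)
  have d8 : m e ≠ c := fun h => he.2.2.2 (by rw [← h, hmm])
  have d9 : m e ≠ m c := fun h => he.2.2.1 (hinj _ _ h)
  obtain ⟨c1, c2⟩ := hc
  obtain ⟨e1, e2, e3, e4⟩ := he
  have ma := hmm a
  have mc := hmm c
  have me := hmm e
  clear_value a
  let f : Fin 6 → Fin 6 := ![a, c, m a, m c, e, m e]
  have finj : Function.Injective f := by
    intro i j hij
    fin_cases i <;> fin_cases j <;> simp [f] at hij ⊢ <;> grind
  have fbij : Function.Bijective f := Finite.injective_iff_bijective.1 finj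
  refine ⟨RelIso.symm ⟨Equiv.ofBijective f fbij, ?_⟩⟩
  intro i j
  rw [Gd1_adj, SimpleGraph.compl_adj, hadj]
  simp only [Equiv.ofBijective_apply, finj.ne_iff]
  refine and_congr_right fun hij => not_congr ?_
  fin_cases i <;> fin_cases j <;> simp [f] at hij ⊢ <;> grind

theorem matching_of_iso (G : SimpleGraph (Fin n)) (φ : Gᶜ ≃g Gd1) :
    n = 6 ∧ (∀ v, ∃ w, G.Adj v w) ∧ (∀ v w w', G.Adj v w → G.Adj v w' → w = w') := by
  have hn : n = 6 := by simpa using Fintype.card_congr φ.toEquiv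
  have hA : ∀ v w, G.Adj v w ↔ v ≠ w ∧ ¬ Gd1.Adj (φ v) (φ w) := by
    intro v w
    rw [φ.map_adj_iff, SimpleGraph.compl_adj]
    constructor
    · intro h; exact ⟨h.ne, fun h' => h'.2 h⟩
    · rintro ⟨h1, h2⟩; by_contra h; exact h2 ⟨h1, h⟩
  refine ⟨hn, ?_, ?_⟩
  · have key : ∀ i : Fin 6, ∃ j, i ≠ j ∧ ¬ Gd1.Adj i j := by
      simp only [Gd1_adj]; decide
    intro v
    obtain ⟨j, h1, h2⟩ := key (φ v)
    refine ⟨φ.symm j, (hA _ _).2 ⟨?_, by simpa using h2⟩⟩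
    rintro rfl; simp at h1
  · have key : ∀ i j j' : Fin 6, i ≠ j → ¬ Gd1.Adj i j → i ≠ j' → ¬ Gd1.Adj i j' → j = j' := by
      simp only [Gd1_adj]; decide
    intro v w w' h h'
    rw [hA] at h h'
    exact φ.injective (key _ _ _ (φ.injective.ne h.1) h.2 (φ.injective.ne h'.1) h'.2)

end graph

end EPX

/-- If `G` has no isolated vertex and `I(G)` has almost maximal finite
index `t`, then `β_{t,t+4}(I(G)) = β_{t,t+5}(I(G)) = 0`, and `reg(I(G)) = 3` unless the
complement of `G` is (isomorphic to) the `4`-gonal dipyramid `G_{(d)_1}`, in which case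
`reg(I(G)) = 4`. -/
theorem statement14 (K : Type) [Field K] (n t : ℕ) (G : SimpleGraph (Fin n))
    (hiso : ∀ v : Fin n, ∃ w, G.Adj v w)
    (hidx : EP.gIndex K G = (t : ℕ∞)) (hpd : EP.gPd K G = t + 1) :
    EP.gBetti K G t (t + 4) = 0 ∧ EP.gBetti K G t (t + 5) = 0 ∧
    (Nonempty (Gᶜ ≃g Gd1) → EP.gReg K G = 4) ∧
    (¬ Nonempty (Gᶜ ≃g Gd1) → EP.gReg K G = 3) := by
  have hvs := EPX.vsG_two G
  have hB := fun i j => EPX.gBetti_iff K G i j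
  -- index facts
  set A : Set ℕ∞ := {N : ℕ∞ | ∃ i j : ℕ, N = (i : ℕ∞) ∧ i + 2 < j ∧ EP.gBetti K G i j ≠ 0} with hA
  have hidx' : sInf A = (t : ℕ∞) := hidx
  have hAne : A.Nonempty := by
    by_contra h
    rw [Set.not_nonempty_iff_eq_empty] at h
    rw [h, sInf_empty] at hidx'
    exact ENat.coe_ne_top t hidx'.symm
  obtain ⟨j0, hj0, hj0'⟩ : ∃ j, t + 2 < j ∧ EP.gBetti K G t j ≠ 0 := by
    have hm := csInf_mem hAne
    rw [hidx'] at hm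
    obtain ⟨i, j, h1, h2, h3⟩ := hm
    have : t = i := by exact_mod_cast h1
    subst this
    exact ⟨j, h2, h3⟩
  have hlow : ∀ i j, i < t → EP.gBetti K G i j ≠ 0 → j ≤ i + 2 := by
    intro i j hi hb
    by_contra hj
    have hm : (i : ℕ∞) ∈ A := ⟨i, j, rfl, by omega, hb⟩
    have := sInf_le hm
    rw [hidx'] at this
    have : t ≤ i := by exact_mod_cast this
    omega
  have hT : ∀ i j, EP.gBetti K G i j ≠ 0 ↔
      ∃ W : Finset (Fin n), W.card = j ∧ ¬ EPX.Ex (EPX.vsG G) K (i+1) W := by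
    intro i j
    rw [Ne, hB]; push Not; rfl
  have ht : 1 ≤ t := by
    by_contra h
    have h0 : t = 0 := by omega
    subst h0
    obtain ⟨W, hW, hE⟩ := (hT _ _).1 hj0'
    have := EPX.Ex_one _ hvs hE
    omega
  -- pd facts
  have hbdd : BddAbove {i | ∃ j, EP.gBetti K G i j ≠ 0} := by
    by_contra h
    have h1 : sSup {i | ∃ j, EP.gBetti K G i j ≠ 0} = 0 := Nat.sSup_of_not_bddAbove h
    have h2 : sSup {i | ∃ j, EP.gBetti K G i j ≠ 0} = t + 1 := hpd
    omega
  have hhigh : ∀ i j, EP.gBetti K G i j ≠ 0 → i ≤ t + 1 := by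
    intro i j h
    rw [← hpd]
    exact le_csSup hbdd ⟨j, h⟩
  have h1 : ∀ W, ¬ EPX.Ex (EPX.vsG G) K t W → W.card ≤ t + 1 := by
    intro W hW
    obtain ⟨s, rfl⟩ : ∃ s, t = s + 1 := ⟨t - 1, by omega⟩
    have := hlow s W.card (by omega) ((hT _ _).2 ⟨W, rfl, hW⟩)
    omega
  have h2 : ∀ W, ¬ EPX.Ex (EPX.vsG G) K (t+1) W → W.card ≤ t + 3 := by
    intro W hW
    obtain ⟨W', h4, h5⟩ := EPX.Ex_step _ hvs hW
    have := h1 _ h4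
    omega
  have h2' : ∀ W, ¬ EPX.Ex (EPX.vsG G) K (t+2) W → W.card ≤ t + 5 := by
    intro W hW
    obtain ⟨W', h4, h5⟩ := EPX.Ex_step _ hvs hW
    have := h2 _ h4
    omega
  have h3 : ∀ W, EPX.Ex (EPX.vsG G) K (t+3) W := by
    intro W
    by_contra hW
    have := hhigh (t+2) W.card ((hT _ _).2 ⟨W, rfl, hW⟩)
    omega
  -- regularity bounds
  have hbound : ∀ i j, EP.gBetti K G i j ≠ 0 → j ≤ i + 3 ∨ (i = t + 1 ∧ j = t + 5) := by
    intro i j h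
    have hi := hhigh i j h
    rcases Nat.lt_trichotomy i t with hlt | heq | hgt
    · have := hlow i j hlt h; omega
    · subst heq
      obtain ⟨W, hW, hE⟩ := (hT _ _).1 h
      have := h2 _ hE; omega
    · have : i = t + 1 := by omega
      subst this
      obtain ⟨W, hW, hE⟩ := (hT _ _).1 h
      have := h2' _ hE; omega
  have hle4 : ∀ d ∈ {d | ∃ i j, EP.gBetti K G i j ≠ 0 ∧ j = i + d}, d ≤ 4 := by
    rintro d ⟨i, j, h, rfl⟩
    have := hbound _ _ h; omega
  have hge3 : 3 ≤ EP.gReg K G := by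
    have : j0 - t ≤ EP.gReg K G := le_csSup ⟨4, hle4⟩ ⟨t, j0, hj0', by omega⟩
    omega
  refine ⟨?_, ?_, ?_, ?_⟩
  · by_contra h
    have := hbound _ _ h; omega
  · by_contra h
    have := hbound _ _ h; omega
  · rintro ⟨φ⟩
    obtain ⟨hn, hex, huq⟩ := EPX.matching_of_iso G φ
    apply le_antisymm
    · exact csSup_le ⟨_, t, j0, hj0', (by omega : j0 = t + (j0 - t))⟩ hle4
    · have hU : EPX.Uq (EPX.vsG G) Finset.univ := by
        intro a k k' ha _ ha' _
        apply EPX.vsG_inj G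
        obtain ⟨c, d, hcd, hk⟩ := EPX.vsG_edge G k
        obtain ⟨c', d', hcd', hk'⟩ := EPX.vsG_edge G k'
        rw [hk, hk']
        rw [hk] at ha
        rw [hk'] at ha'
        simp only [Finset.mem_insert, Finset.mem_singleton] at ha ha'
        rcases ha with rfl | rfl <;> rcases ha' with rfl | rfl
        · rw [huq _ _ _ hcd hcd']
        · rw [huq _ _ _ hcd hcd'.symm, Finset.pair_comm]
        · rw [huq _ _ _ hcd.symm hcd', Finset.pair_comm]
        · rw [huq _ _ _ hcd.symm hcd'.symm]
      have hM : EPX.VV (EPX.vsG G) Finset.univ = Finset.univ := by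
        rw [Finset.eq_univ_iff_forall]
        intro v
        obtain ⟨w, hw⟩ := hex v
        obtain ⟨k, hk⟩ := EPX.vsG_adj G hw
        exact Finset.mem_biUnion.2 ⟨k, Finset.mem_univ _, by rw [hk]; simp⟩
      have hc := EPX.Uq_card _ hU hvs hM
      have hE := EPX.not_Ex_matching (K := K) _ hU hvs hM
      have hc3 : (Finset.univ : Finset (Fin (EP.edgeFins G).card)).card = 3 := by
        have : (Finset.univ : Finset (Fin n)).card = 6 := by simp [hn]
        omega
      rw [hc3] at hE
      refine le_csSup ⟨4, hle4⟩ ⟨2, 6, (hT _ _).2 ⟨Finset.univ, by simp [hn], hE⟩, rfl⟩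
  · intro hno
    apply le_antisymm _ hge3
    refine csSup_le ⟨_, t, j0, hj0', (by omega : j0 = t + (j0 - t))⟩ ?_
    rintro d ⟨i, j, h, rfl⟩
    rcases hbound _ _ h with h' | ⟨rfl, h'⟩
    · omega
    · exfalso
      apply hno
      obtain ⟨W, hW, hE⟩ := (hT _ _).1 h
      have hiso' : ∀ v, ∃ k, v ∈ EPX.vsG G k := by
        intro v
        obtain ⟨w, hw⟩ := hiso v
        obtain ⟨k, hk⟩ := EPX.vsG_adj G hw
        exact ⟨k, by rw [hk]; simp⟩
      obtain ⟨_, hn, hU⟩ := EPX.main_comb (K := K) _ hvs (EPX.vsG_inj G) h1 h3 hiso' hE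
        (by omega)
      refine EPX.iso_of_matching G hn hiso ?_
      intro v w w' hw hw'
      obtain ⟨k, hk⟩ := EPX.vsG_adj G hw
      obtain ⟨k', hk'⟩ := EPX.vsG_adj G hw'
      have hkk : k = k' := hU v k k' (by rw [hk]; simp) (Finset.subset_univ _)
        (by rw [hk']; simp) (Finset.subset_univ _)
      subst hkk
      have : w ∈ ({v, w'} : Finset (Fin n)) := by rw [← hk', hk]; simp
      simp only [Finset.mem_insert, Finset.mem_singleton] at this
      rcases this with h | h
      · exact absurd h.symm hw.ne
      · exact h
end

section
/- Let G be a simple graph on n ≥ 7 vertices whose complement Ḡ = G_{(b)} consists of a cycle C = 1-2-...-(t+3)-1 (t = n − 5 ≥ 2), a vertex t+4 adjacent in Ḡ to all vertices of C, and a vertex t+5 adjacent in Ḡ only to t+4. Then I(G)^s has a linear resolution for all s ≥ 2. -/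
open Finsupp

/-- The graph `G_{(b)}`: a cycle `0 - 1 - ⋯ - (t+2) - 0`, a vertex `t+3` adjacent to all
vertices of the cycle, and a vertex `t+4` adjacent only to `t+3`. -/
def Gb (t : ℕ) : SimpleGraph (Fin (t + 5)) :=
  SimpleGraph.fromRel (fun i j =>
    ((j : ℕ) = (i : ℕ) + 1 ∧ (j : ℕ) ≤ t + 2) ∨ ((i : ℕ) = 0 ∧ (j : ℕ) = t + 2) ∨
    ((j : ℕ) = t + 3 ∧ (i : ℕ) ≤ t + 2) ∨ ((i : ℕ) = t + 3 ∧ (j : ℕ) = t + 4))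

namespace LQ

set_option linter.unusedSectionVars false

section hom
variable {K : Type} [Field K] {ι : Type} [Fintype ι] [DecidableEq ι]

structure GoodSign (e : Finset ι → ι → K) : Prop where
  sq : ∀ S k, e S k * e S k = 1
  anti : ∀ S k l, k ∉ S → l ∉ S → k ≠ l →
    e (insert k (insert l S)) k * e (insert l S) l
      + e (insert k (insert l S)) l * e (insert k S) k = 0

/-- boundary coefficient -/
def bd (e : Finset ι → ι → K) (c : Finset ι → K) (T : Finset ι) : K :=
  ∑ k, if k ∈ T then 0 else e (insert k T) k * c (insert k T)

/-- exactness in cardinality `p` of the chains on a family of finsets. -/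
def Ex (e : Finset ι → ι → K) (F : Set (Finset ι)) (p : ℕ) : Prop :=
  ∀ c : Finset ι → K, (∀ S, c S ≠ 0 → S ∈ F ∧ S.card = p) →
    (∀ T ∈ F, bd e c T = 0) →
    ∃ b : Finset ι → K, (∀ S, b S ≠ 0 → S ∈ F ∧ S.card = p + 1) ∧
      ∀ T ∈ F, bd e b T = c T

def Cvx (F : Set (Finset ι)) : Prop :=
  ∀ S T U, S ∈ F → U ∈ F → S ⊆ T → T ⊆ U → T ∈ F

theorem Ex.trivial {e : Finset ι → ι → K} {F : Set (Finset ι)} {p : ℕ}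
    (h : ∀ S ∈ F, S.card ≠ p) : Ex e F p := by
  intro c hc _
  refine ⟨0, by simp, fun T hT => ?_⟩
  have : c T = 0 := by
    by_contra h0
    exact h T (hc T h0).1 (hc T h0).2
  simp [bd, this]

theorem bd_sub (e : Finset ι → ι → K) (b c : Finset ι → K) (T : Finset ι) :
    bd e (fun S => b S - c S) T = bd e b T - bd e c T := by
  unfold bd
  rw [← Finset.sum_sub_distrib]
  refine Finset.sum_congr rfl fun k _ => ?_
  split_ifs <;> ring

theorem bd_add (e : Finset ι → ι → K) (b c : Finset ι → K) (T : Finset ι) :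
    bd e (fun S => b S + c S) T = bd e b T + bd e c T := by
  unfold bd
  rw [← Finset.sum_add_distrib]
  refine Finset.sum_congr rfl fun k _ => ?_
  split_ifs <;> ring

theorem bd_bd {e : Finset ι → ι → K} (he : GoodSign e) {F : Set (Finset ι)} (hF : Cvx F)
    (b : Finset ι → K) (hb : ∀ S, b S ≠ 0 → S ∈ F) (c : Finset ι → K)
    (hc : ∀ T ∈ F, c T = bd e b T) (hc' : ∀ T, T ∉ F → c T = 0) (T : Finset ι) (hT : T ∈ F) :
    bd e c T = 0 := by
  have h1 : bd e c T = ∑ k, ∑ l, if k ∈ T ∨ l ∈ T ∨ k = l then 0 else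
      e (insert k T) k * (e (insert l (insert k T)) l * b (insert l (insert k T))) := by
    unfold bd
    refine Finset.sum_congr rfl fun k _ => ?_
    by_cases hk : k ∈ T
    · simp [hk]
    have h2 : c (insert k T) = bd e b (insert k T) := by
      by_cases hm : insert k T ∈ F
      · exact hc _ hm
      · rw [hc' _ hm]
        symm
        refine Finset.sum_eq_zero fun l hl => ?_
        have : b (insert l (insert k T)) = 0 := by
          by_contra h0
          exact hm (hF T _ _ hT (hb _ h0) (Finset.subset_insert _ _) (Finset.subset_insert _ _))
        rw [this, mul_zero, ite_self]
    rw [h2, if_neg hk]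
    unfold bd
    rw [Finset.mul_sum]
    refine Finset.sum_congr rfl fun l _ => ?_
    by_cases hl : l ∈ T
    · simp [hl]
    · by_cases hkl : k = l
      · simp [hkl]
      · have : l ≠ k := fun h => hkl h.symm
        simp [hk, hl, hkl, this]
  rw [h1, ← Finset.sum_product']
  refine Finset.sum_involution (fun x _ => (x.2, x.1)) ?_ ?_ ?_ ?_
  · rintro ⟨k, l⟩ -
    dsimp only
    by_cases hk : k ∈ T
    · simp [hk]
    by_cases hl : l ∈ T
    · simp [hl]
    by_cases hkl : k = l
    · simp [hkl]
    have : l ≠ k := fun h => hkl h.symm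
    simp only [hk, hl, hkl, this, or_self, if_false]
    have h3 := he.anti T k l hk hl hkl
    rw [Finset.insert_comm l k]
    linear_combination (b (insert k (insert l T))) * h3
  · rintro ⟨k, l⟩ - h
    dsimp only at h ⊢
    intro h4
    simp only [Prod.mk.injEq] at h4
    simp [h4.1] at h
  · simp
  · simp

theorem Ex.extend {e : Finset ι → ι → K} (he : GoodSign e) {F : Set (Finset ι)} (hF : Cvx F)
    (k : ι) (p : ℕ) (h0 : Ex e {S | k ∉ S ∧ S ∈ F} p)
    (h1 : ∀ q, q + 1 = p → Ex e {S | k ∉ S ∧ insert k S ∈ F} q) : Ex e F p := by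
  intro c hc hcyc
  -- step one: find b'
  obtain ⟨b', hb'1, hb'2⟩ : ∃ b' : Finset ι → K, (∀ S, b' S ≠ 0 → S ∈ F ∧ S.card = p + 1) ∧
      ∀ T ∈ F, k ∈ T → bd e b' T = c T := by
    rcases Nat.eq_zero_or_pos p with hp | hp
    · refine ⟨0, by simp, fun T hT hk => ?_⟩
      have : c T = 0 := by
        by_contra h
        have := (hc T h).2
        rw [hp, Finset.card_eq_zero] at this
        simp [this] at hk
      simp [bd, this]
    obtain ⟨q, rfl⟩ : ∃ q, p = q + 1 := ⟨p - 1, by omega⟩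
    obtain ⟨b1, hb1, hb1'⟩ := h1 q rfl
      (fun S => if k ∈ S then 0 else e (insert k S) k * c (insert k S)) (by
        intro S hS
        by_cases hk : k ∈ S
        · simp [hk] at hS
        simp only [hk, if_false] at hS
        have h2 := hc (insert k S) (right_ne_zero_of_mul hS)
        rw [Finset.card_insert_of_notMem hk] at h2
        exact ⟨⟨hk, h2.1⟩, by omega⟩) (by
        rintro T ⟨hk, hT⟩
        have h3 := hcyc _ hT
        have : bd e (fun S => if k ∈ S then 0 else e (insert k S) k * c (insert k S)) T
          = - e (insert k T) k * bd e c (insert k T) := by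
          unfold bd
          rw [Finset.mul_sum]
          refine Finset.sum_congr rfl fun j _ => ?_
          by_cases hj : j ∈ T
          · simp [hj]
          by_cases hjk : j = k
          · simp [hjk]
          have hkj : k ≠ j := fun h => hjk h.symm
          simp only [hj, hjk, hk, hkj, Finset.mem_insert, or_self, if_false]
          have h3 := he.anti T k j hk hj hkj
          rw [Finset.insert_comm j k]
          linear_combination c (insert k (insert j T)) * h3
        rw [this, h3, mul_zero])
    refine ⟨fun S => if k ∈ S then - e S k * b1 (S.erase k) else 0, ?_, ?_⟩
    · intro S hS
      by_cases hk : k ∈ S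
      · simp only [hk, if_true] at hS
        have h2 := hb1 _ (right_ne_zero_of_mul hS)
        simp only [Set.mem_ofPred_eq, Finset.insert_erase hk, Finset.card_erase_of_mem hk] at h2
        have := Finset.card_pos.mpr ⟨k, hk⟩
        exact ⟨h2.1.2, by omega⟩
      · simp [hk] at hS
    · intro T hT hk
      obtain ⟨U, hU, rfl⟩ : ∃ U, k ∉ U ∧ T = insert k U :=
        ⟨T.erase k, by simp, (Finset.insert_erase hk).symm⟩
      have h2 := hb1' U ⟨hU, hT⟩
      simp only [hU, if_false] at h2
      have h5 : c (insert k U) = e (insert k U) k * bd e b1 U := by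
        rw [h2, ← mul_assoc, he.sq, one_mul]
      rw [h5]
      unfold bd
      rw [Finset.mul_sum]
      refine Finset.sum_congr rfl fun j _ => ?_
      by_cases hj : j ∈ U
      · simp [hj]
      by_cases hjk : j = k
      · subst hjk
        have : b1 (insert j U) = 0 := by
          by_contra h
          exact (hb1 _ h).1.1 (Finset.mem_insert_self _ _)
        simp [this]
      have hkj : k ≠ j := fun h => hjk h.symm
      have e1 : (insert j (insert k U)).erase k = insert j U := by
        rw [Finset.insert_comm, Finset.erase_insert]
        simp [hU, hkj]
      simp only [hj, hjk, Finset.mem_insert, or_self, if_false, true_or, or_true, if_true, e1]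
      have h3 := he.anti U k j hU hj hkj
      rw [Finset.insert_comm j k]
      have s1 := he.sq (insert k (insert j U)) k
      have s2 := he.sq (insert k U) k
      linear_combination b1 (insert j U) * (- e (insert k U) k * e (insert k (insert j U)) k * h3 + e (insert j U) j * e (insert k U) k * s1 + e (insert k (insert j U)) j * e (insert k (insert j U)) k * s2)
  -- step two
  classical
  set d : Finset ι → K := fun T => if T ∈ F then bd e b' T else 0 with hd
  have hdF : ∀ T ∈ F, d T = bd e b' T := fun T hT => by simp [hd, hT]
  have hdd : ∀ T ∈ F, bd e d T = 0 :=
    bd_bd he hF b' (fun S h => (hb'1 S h).1) d hdF (fun T hT => by simp [hd, hT])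
  have hdcard : ∀ T, d T ≠ 0 → T ∈ F ∧ T.card = p := by
    intro T hT
    by_cases hTF : T ∈ F
    · refine ⟨hTF, ?_⟩
      rw [hdF T hTF] at hT
      obtain ⟨j, _, hj⟩ := Finset.exists_ne_zero_of_sum_ne_zero hT
      by_cases hjT : j ∈ T
      · simp [hjT] at hj
      simp only [hjT, if_false] at hj
      have := (hb'1 _ (right_ne_zero_of_mul hj)).2
      rw [Finset.card_insert_of_notMem hjT] at this
      omega
    · simp [hd, hTF] at hT
  have hck : ∀ S, c S - d S ≠ 0 → (k ∉ S ∧ S ∈ F) ∧ S.card = p := by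
    intro S hS
    have hm : S ∈ F ∧ S.card = p := by
      by_cases h : c S = 0
      · refine hdcard S ?_
        intro h'
        simp [h, h'] at hS
      · exact hc S h
    refine ⟨⟨fun hk => hS ?_, hm.1⟩, hm.2⟩
    rw [hdF S hm.1, hb'2 S hm.1 hk, sub_self]
  obtain ⟨b0, hb0, hb0'⟩ := h0 (fun S => c S - d S) hck (by
    rintro T ⟨_, hT⟩
    rw [bd_sub, hcyc T hT, hdd T hT, sub_zero])
  refine ⟨fun S => b0 S + b' S, ?_, ?_⟩
  · intro S hS
    by_cases h : b0 S = 0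
    · refine hb'1 S ?_
      intro h'
      simp [h, h'] at hS
    · exact ⟨(hb0 S h).1.2, (hb0 S h).2⟩
  · intro T hT
    rw [bd_add]
    by_cases hk : k ∈ T
    · rw [hb'2 T hT hk]
      have : bd e b0 T = 0 := by
        refine Finset.sum_eq_zero fun j _ => ?_
        have : b0 (insert j T) = 0 := by
          by_contra h
          exact (hb0 _ h).1.1 (Finset.mem_insert_of_mem hk)
        simp [this]
      rw [this, zero_add]
    · rw [hb0' T ⟨hk, hT⟩, ← hdF T hT]
      ring

theorem Ex.cone {e : Finset ι → ι → K} (he : GoodSign e) {F : Set (Finset ι)} 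
    (k : ι) (p : ℕ) (hF : ∀ S, k ∉ S → (S ∈ F ↔ insert k S ∈ F)) : Ex e F p := by
  intro c hc hcyc
  refine ⟨fun S => if k ∈ S then e S k * c (S.erase k) else 0, ?_, ?_⟩
  · intro S hS
    by_cases hk : k ∈ S
    · simp only [hk, if_true] at hS
      have h2 := hc _ (right_ne_zero_of_mul hS)
      have h3 := (hF (S.erase k) (by simp)).1 h2.1
      rw [Finset.insert_erase hk] at h3
      have := h2.2
      rw [Finset.card_erase_of_mem hk] at this
      have := Finset.card_pos.mpr ⟨k, hk⟩
      exact ⟨h3, by omega⟩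
    · simp [hk] at hS
  · intro T hT
    by_cases hk : k ∈ T
    · obtain ⟨U, hU, rfl⟩ : ∃ U, k ∉ U ∧ T = insert k U :=
        ⟨T.erase k, by simp, (Finset.insert_erase hk).symm⟩
      have h2 := hcyc U ((hF U hU).2 hT)
      have h4 : c (insert k U) = c (insert k U) - e (insert k U) k * bd e c U := by
        rw [h2]; ring
      rw [h4]
      unfold bd
      rw [Finset.mul_sum, ← Finset.add_sum_erase _ _ (Finset.mem_univ k),
        ← Finset.add_sum_erase (a := k) _ (fun i => e (insert k U) k * _) (Finset.mem_univ k)]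
      have h7 : ∑ x ∈ Finset.univ.erase k, (if x ∈ insert k U then 0 else
          e (insert x (insert k U)) x * (if k ∈ insert x (insert k U) then
            e (insert x (insert k U)) k * c ((insert x (insert k U)).erase k) else 0))
          = - ∑ x ∈ Finset.univ.erase k, e (insert k U) k *
            (if x ∈ U then 0 else e (insert x U) x * c (insert x U)) := by
        rw [← Finset.sum_neg_distrib]
        refine Finset.sum_congr rfl fun j hj => ?_
        have hjk : j ≠ k := by simpa using hj
        by_cases hj : j ∈ U
        · simp [hj]
        have hkj : k ≠ j := fun h => hjk h.symm
        have e1 : (insert j (insert k U)).erase k = insert j U := by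
          rw [Finset.insert_comm, Finset.erase_insert]
          simp [hU, hkj]
        simp only [hj, hjk, Finset.mem_insert, or_self, if_false, true_or, or_true, if_true, e1]
        have h3 := he.anti U k j hU hj hkj
        rw [Finset.insert_comm j k]
        have s1 := he.sq (insert k (insert j U)) k
        have s2 := he.sq (insert k U) k
        linear_combination c (insert j U) * (e (insert k U) k * e (insert k (insert j U)) k * h3 - e (insert j U) j * e (insert k U) k * s1 - e (insert k (insert j U)) j * e (insert k (insert j U)) k * s2)
      rw [h7]
      simp only [Finset.mem_insert_self, if_true, hU, if_false, zero_add]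
      linear_combination (c (insert k U)) * he.sq (insert k U) k
    · unfold bd
      rw [Finset.sum_eq_single k]
      · simp only [hk, if_false, Finset.mem_insert_self, if_true, Finset.erase_insert hk]
        rw [← mul_assoc, he.sq, one_mul]
      · intro j _ hjk
        have hkj : k ≠ j := fun h => hjk h.symm
        simp [hk, hkj]
      · simp


end hom

section fam
variable {K : Type} [Field K] {ι : Type} [Fintype ι] [DecidableEq ι] {n : ℕ}

def jn (g : ι → Fin n → ℕ) (m : Fin n → ℕ) (S : Finset ι) : Fin n → ℕ :=
  fun x => max (m x) (S.sup fun k => g k x)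

theorem jn_mono (g : ι → Fin n → ℕ) (m : Fin n → ℕ) {S T : Finset ι} (h : S ⊆ T) (x : Fin n) :
    jn g m S x ≤ jn g m T x := max_le_max le_rfl (Finset.sup_mono h)

theorem jn_insert (g : ι → Fin n → ℕ) (m : Fin n → ℕ) (S : Finset ι) (k : ι) :
    jn g m (insert k S) = jn g (fun x => max (m x) (g k x)) S := by
  funext x
  simp [jn, Finset.sup_insert, max_assoc]

def Fam (g : ι → Fin n → ℕ) (A : Finset ι) (m : Fin n → ℕ) (j : ℕ) : Set (Finset ι) :=
  {S | S ⊆ A ∧ ∑ x, jn g m S x = j}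

theorem Fam_cvx (g : ι → Fin n → ℕ) (A : Finset ι) (m : Fin n → ℕ) (j : ℕ) :
    Cvx (Fam g A m j) := by
  rintro S T U ⟨hS, hS'⟩ ⟨hU, hU'⟩ h1 h2
  refine ⟨h2.trans hU, le_antisymm ?_ ?_⟩
  · rw [← hU']
    exact Finset.sum_le_sum fun x _ => jn_mono g m h2 x
  · rw [← hS']
    exact Finset.sum_le_sum fun x _ => jn_mono g m h1 x

theorem Fam_extend {e : Finset ι → ι → K} (he : GoodSign e) (g : ι → Fin n → ℕ) (A : Finset ι)
    (m : Fin n → ℕ) (j : ℕ) (k : ι) (hk : k ∉ A) (p : ℕ)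
    (h0 : Ex e (Fam g A m j) p)
    (h1 : ∀ q, q + 1 = p → Ex e (Fam g A (fun x => max (m x) (g k x)) j) q) :
    Ex e (Fam g (insert k A) m j) p := by
  refine Ex.extend he (Fam_cvx _ _ _ _) k p ?_ ?_
  · convert h0 using 1
    ext S
    constructor
    · rintro ⟨h, h', h''⟩
      exact ⟨(Finset.subset_insert_iff_of_notMem h).1 h', h''⟩
    · rintro ⟨h', h''⟩
      exact ⟨fun h => hk (h' h), h'.trans (Finset.subset_insert _ _), h''⟩
  · intro q hq
    convert h1 q hq using 1
    ext S
    constructor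
    · rintro ⟨h, h', h''⟩
      rw [jn_insert] at h''
      refine ⟨?_, h''⟩
      exact (Finset.subset_insert_iff_of_notMem h).1 ((Finset.subset_insert _ _).trans h')
    · rintro ⟨h', h''⟩
      refine ⟨fun h => hk (h' h), Finset.insert_subset_insert _ h', ?_⟩
      rw [jn_insert]
      exact h''

theorem Fam_cone {e : Finset ι → ι → K} (he : GoodSign e) (g : ι → Fin n → ℕ) (A : Finset ι)
    (m : Fin n → ℕ) (j : ℕ) (k : ι) (hk : k ∈ A) (h : ∀ x, g k x ≤ m x) (p : ℕ) :
    Ex e (Fam g A m j) p := by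
  refine Ex.cone he k p fun S hS => ?_
  have : (fun x => max (m x) (g k x)) = m := by
    funext x; exact max_eq_left (h x)
  constructor
  · rintro ⟨h1, h2⟩
    exact ⟨Finset.insert_subset hk h1, by rw [jn_insert, this]; exact h2⟩
  · rintro ⟨h1, h2⟩
    rw [jn_insert, this] at h2
    exact ⟨(Finset.subset_insert _ _).trans h1, h2⟩

/-- adding redundant generators. -/
theorem Fam_redundant {e : Finset ι → ι → K} (he : GoodSign e) (g : ι → Fin n → ℕ)
    (W A : Finset ι) (m : Fin n → ℕ) (j : ℕ) (p : ℕ) (hWA : W ⊆ A)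
    (h : ∀ u ∈ A, u ∉ W → ∃ w ∈ W, ∀ x, g w x ≤ max (m x) (g u x))
    (hW : Ex e (Fam g W m j) p) : Ex e (Fam g A m j) p := by
  have key : ∀ D : Finset ι, (∀ u ∈ D, u ∈ A ∧ u ∉ W) → Ex e (Fam g (D ∪ W) m j) p := by
    intro D
    induction D using Finset.induction_on with
    | empty => intro _; simpa using hW
    | insert a D ha ih =>
      intro hD
      rw [Finset.insert_union]
      obtain ⟨h1, h2⟩ := hD a (Finset.mem_insert_self _ _)
      refine Fam_extend he g _ m j a (by simp [ha, h2]) p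
        (ih fun u hu => hD u (Finset.mem_insert_of_mem hu)) fun q _ => ?_
      obtain ⟨w, hw, hw'⟩ := h a h1 h2
      exact Fam_cone he g _ _ j w (Finset.mem_union_right _ hw) hw' q
  have := key (A \ W) (fun u hu => by simpa using hu)
  rwa [Finset.sdiff_union_of_subset hWA] at this

/-- colon ideal generated by variables. -/
theorem Fam_vars {e : Finset ι → ι → K} (he : GoodSign e) (g : ι → Fin n → ℕ)
    (A : Finset ι) (v : Fin n → ℕ) (j q : ℕ)
    (h : ∀ u ∈ A, ∃ w ∈ A, ∃ p, g w p = v p + 1 ∧ (∀ x, x ≠ p → g w x ≤ v x) ∧ v p < g u p)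
    (hj : j ≠ q + ∑ x, v x) : Ex e (Fam g A v j) q := by
  classical
  let Good : Fin n → ι → Prop := fun p w => w ∈ A ∧ g w p = v p + 1 ∧ (∀ x, x ≠ p → g w x ≤ v x)
  let P : Finset (Fin n) := Finset.univ.filter fun p => ∃ w, Good p w
  have hP : ∀ p : P, ∃ w, Good p w := fun p => by
    exact (Finset.mem_filter.1 p.2).2
  choose f hf using hP
  have hfinj : Function.Injective f := by
    intro p p' hpp
    by_contra hne
    have h1 := (hf p).2.1
    have h2 := (hf p').2.2 p (fun h => hne (Subtype.ext h))
    rw [← hpp] at h2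
    omega
  let W : Finset ι := Finset.univ.image f
  refine Fam_redundant he g W A v j q ?_ ?_ ?_
  · intro w hw
    obtain ⟨p, _, rfl⟩ := Finset.mem_image.1 hw
    exact (hf p).1
  · intro u hu _
    obtain ⟨w, hw, p, h1, h2, h3⟩ := h u hu
    have hp : p ∈ P := by
      simp only [P, Finset.mem_filter, Finset.mem_univ, true_and]
      exact ⟨w, hw, h1, h2⟩
    refine ⟨f ⟨p, hp⟩, Finset.mem_image_of_mem _ (Finset.mem_univ _), fun x => ?_⟩
    obtain ⟨-, h4, h5⟩ := hf ⟨p, hp⟩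
    by_cases hx : x = p
    · subst hx
      exact le_max_of_le_right (by simp only at h4; omega)
    · exact le_max_of_le_left (h5 x hx)
  · refine Ex.trivial ?_
    rintro S ⟨hS, hS'⟩ hcard
    apply hj
    rw [← hS', ← hcard]
    obtain ⟨Q, rfl⟩ : ∃ Q : Finset P, S = Q.image f := by
      refine ⟨Finset.univ.filter fun p => f p ∈ S, ?_⟩
      ext w
      constructor
      · intro hw
        obtain ⟨p, _, rfl⟩ := Finset.mem_image.1 (hS hw)
        exact Finset.mem_image_of_mem _ (by simpa using hw)
      · intro hw
        obtain ⟨p, hp, rfl⟩ := Finset.mem_image.1 hw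
        simpa using hp
    rw [Finset.card_image_of_injective _ hfinj]
    have : ∀ x, jn g v (Q.image f) x = v x + if x ∈ Q.map ⟨Subtype.val, Subtype.val_injective⟩ then 1 else 0 := by
      intro x
      unfold jn
      split_ifs with hx
      · obtain ⟨p, hp, rfl⟩ := Finset.mem_map.1 hx
        apply le_antisymm
        · refine max_le (by simp) (Finset.sup_le ?_)
          intro w hw
          obtain ⟨p', _, rfl⟩ := Finset.mem_image.1 hw
          obtain ⟨-, h4, h5⟩ := hf p'
          by_cases hx : p = p'
          · subst hx; exact h4.le
          · exact (h5 _ (fun h => hx (Subtype.ext h))).trans (by simp)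
        · refine le_max_of_le_right ?_
          refine (hf p).2.1.symm.le.trans ?_
          exact Finset.le_sup (f := fun k => g k p) (Finset.mem_image_of_mem f hp)
      · rw [add_zero]
        refine max_eq_left (Finset.sup_le ?_)
        intro w hw
        obtain ⟨p', hp', rfl⟩ := Finset.mem_image.1 hw
        obtain ⟨-, h4, h5⟩ := hf p'
        refine h5 _ ?_
        rintro rfl
        exact hx (Finset.mem_map.2 ⟨p', hp', rfl⟩)
    simp only [this, Finset.sum_add_distrib]
    rw [Finset.sum_ite_mem, Finset.univ_inter, Finset.sum_const, Finset.card_map, smul_eq_mul,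
      mul_one, add_comm]

theorem lin_quot {e : Finset ι → ι → K} (he : GoodSign e) (g : ι → Fin n → ℕ)
    {α : Type} [LinearOrder α] (rk : ι → α) (d : ℕ) (A : Finset ι)
    (hinj : ∀ u ∈ A, ∀ v ∈ A, rk u = rk v → u = v)
    (hd : ∀ u ∈ A, ∑ x, g u x = d)
    (hlq : ∀ u ∈ A, ∀ v ∈ A, rk v < rk u → ∃ w ∈ A, rk v < rk w ∧
      ∃ p, g w p = g v p + 1 ∧ (∀ x, x ≠ p → g w x ≤ g v x) ∧ g v p < g u p)
    (hred : ∀ u, u ∉ A → ∃ w ∈ A, ∀ x, g w x ≤ g u x) (i j : ℕ) (hij : j ≠ i + d) :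
    Ex e {S | ∑ x, jn g 0 S x = j} (i + 1) := by
  have h1 : Ex e (Fam g A 0 j) (i + 1) := by
    have key : ∀ B : Finset ι, B ⊆ A → (∀ u ∈ B, ∀ w ∈ A, rk u < rk w → w ∈ B) →
        Ex e (Fam g B 0 j) (i + 1) := by
      intro B
      induction B using Finset.induction_on_min_value rk with
      | empty =>
        intro _ _
        refine Ex.trivial ?_
        rintro S ⟨hS, _⟩ hc
        rw [Finset.subset_empty.1 hS] at hc
        simp at hc
      | insert a B ha hmin ih =>
        intro hBA hup
        have haA : a ∈ A := hBA (Finset.mem_insert_self _ _)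
        have hBA' : B ⊆ A := (Finset.subset_insert _ _).trans hBA
        have hlt : ∀ u ∈ B, rk a < rk u := fun u hu =>
          lt_of_le_of_ne (hmin u hu) fun h => ha ((hinj a haA u (hBA' hu) h) ▸ hu)
        have hup' : ∀ u ∈ B, ∀ w ∈ A, rk u < rk w → w ∈ B := by
          intro u hu w hw huw
          rcases Finset.mem_insert.1 (hup u (Finset.mem_insert_of_mem hu) w hw huw) with h | h
          · subst h
            exact absurd (huw.trans (hlt u hu)) (lt_irrefl _)
          · exact h
        refine Fam_extend he g B 0 j a ha (i + 1) (ih hBA' hup') fun q hq => ?_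
        have : (fun x => max ((0 : Fin n → ℕ) x) (g a x)) = g a := by
          funext x; simp
        rw [this]
        refine Fam_vars he g B (g a) j q ?_ ?_
        · intro u hu
          obtain ⟨w, hw, h3, p, h4⟩ := hlq u (hBA' hu) a haA (hlt u hu)
          refine ⟨w, ?_, p, h4⟩
          rcases Finset.mem_insert.1 (hup a (Finset.mem_insert_self _ _) w hw h3) with h | h
          · subst h; exact absurd h3 (lt_irrefl _)
          · exact h
        · rw [hd a haA]; omega
    exact key A subset_rfl fun _ _ w hw _ => hw
  have h2 := Fam_redundant he g A Finset.univ 0 j (i + 1) (Finset.subset_univ _)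
    (fun u _ hu => by
      obtain ⟨w, hw, h⟩ := hred u hu
      exact ⟨w, hw, fun x => le_max_of_le_right (h x)⟩) h1
  convert h2 using 1
  ext S
  constructor
  · intro h; exact ⟨Finset.subset_univ _, h⟩
  · intro h; exact h.2

end fam
section bridge
variable {K : Type} [Field K] {n r : ℕ}

/-- the standard sign -/
def sgn (K : Type) [Field K] {r : ℕ} (S : Finset (Fin r)) (k : Fin r) : K :=
  (-1 : K) ^ ((S.filter (fun j => j < k)).card)

theorem sgn_good : GoodSign (sgn K (r := r)) := by
  constructor
  · intro S k
    unfold sgn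
    rw [← pow_add, ← two_mul, pow_mul]
    simp
  · have key : ∀ (S : Finset (Fin r)) (k l : Fin r), k ∉ S → l ∉ S → k < l →
        sgn K (insert k (insert l S)) k = sgn K S k ∧ sgn K (insert l S) l = sgn K S l ∧
        sgn K (insert k (insert l S)) l = - sgn K S l ∧ sgn K (insert k S) k = sgn K S k := by
      intro S k l hk hl hkl
      have hlk : ¬ l < k := not_lt.2 hkl.le
      unfold sgn
      refine ⟨?_, ?_, ?_, ?_⟩
      · simp [Finset.filter_insert, hlk]
      · simp [Finset.filter_insert]
      · simp only [Finset.filter_insert, hkl, if_true, lt_irrefl, if_false]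
        rw [Finset.card_insert_of_notMem (by simp [hk]), pow_succ]
        ring
      · simp [Finset.filter_insert]
    intro S k l hk hl hkl
    rcases lt_or_gt_of_ne hkl with h | h
    · obtain ⟨h1, h2, h3, h4⟩ := key S k l hk hl h
      rw [h1, h2, h3, h4]; ring
    · obtain ⟨h1, h2, h3, h4⟩ := key S l k hl hk h
      rw [Finset.insert_comm, h1, h2, h3, h4]; ring

theorem bdT_apply (g : Fin r → (Fin n → ℕ)) (c : Finset (Fin r) →₀ K) (T : Finset (Fin r)) :
    EP.bdT K g c T = ∑ k, if k ∈ T then 0 else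
      if EP.mlcm g T = EP.mlcm g (insert k T) then sgn K (insert k T) k * c (insert k T) else 0 := by
  classical
  induction c using Finsupp.induction_linear with
  | zero => simp
  | add f g hf hg =>
    rw [map_add, Finsupp.add_apply, hf, hg, ← Finset.sum_add_distrib]
    refine Finset.sum_congr rfl fun k _ => ?_
    rw [Finsupp.add_apply]
    split_ifs <;> ring
  | single S a =>
    unfold EP.bdT
    rw [Finsupp.lsum_single, LinearMap.toSpanSingleton_apply, Finsupp.smul_apply,
      Finsupp.finsetSum_apply, smul_eq_mul, Finset.mul_sum, ← Finset.sum_filter_add_sum_filter_not Finset.univ (fun k => k ∈ S)]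
    rw [Finset.sum_eq_zero (s := Finset.univ.filter fun k => ¬ k ∈ S), add_zero]
    · refine Finset.sum_congr (by ext; simp) fun k hk => ?_
      have hk : k ∈ S := by simpa using hk
      by_cases hT : S.erase k = T
      · subst hT
        have : insert k (S.erase k) = S := Finset.insert_erase hk
        simp only [this]
        split_ifs <;> simp_all [sgn, mul_comm]
      · by_cases hkT : k ∈ T
        · split_ifs <;> simp [hT]
        · have : S ≠ insert k T := by
            rintro rfl
            exact hT (Finset.erase_insert hkT)
          split_ifs <;> simp [hT, this]
    · intro k hk
      have hk : k ∉ S := by simpa using hk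
      have : S ≠ insert k T := by
        rintro rfl
        simp at hk
      simp [this]

theorem mem_strand (g : Fin r → (Fin n → ℕ)) (p j : ℕ) (c : Finset (Fin r) →₀ K) :
    c ∈ EP.strand K g p j ↔ ∀ S, c S ≠ 0 → S.card = p ∧ ∑ x, EP.mlcm g S x = j := by
  have : EP.strand K g p j =
      Finsupp.supported K K {S : Finset (Fin r) | S.card = p ∧ ∑ x, EP.mlcm g S x = j} := by
    rw [Finsupp.supported_eq_span_single]
    unfold EP.strand
    congr 1
    ext c
    constructor
    · rintro ⟨S, h1, h2, rfl⟩
      exact ⟨S, ⟨h1, h2⟩, rfl⟩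
    · rintro ⟨S, ⟨h1, h2⟩, rfl⟩
      exact ⟨S, h1, h2, rfl⟩
  rw [this, Finsupp.mem_supported]
  constructor
  · intro h S hS
    exact h (by simpa using hS)
  · intro h S hS
    exact h S (by simpa using hS)

theorem jn_zero (g : Fin r → (Fin n → ℕ)) (S : Finset (Fin r)) : jn g 0 S = EP.mlcm g S := by
  funext x
  simp [jn, EP.mlcm]

theorem mlcm_eq_of_sum (g : Fin r → (Fin n → ℕ)) {S T : Finset (Fin r)} (h : S ⊆ T)
    (hs : ∑ x, EP.mlcm g S x = ∑ x, EP.mlcm g T x) : EP.mlcm g S = EP.mlcm g T := by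
  have hle : ∀ x ∈ Finset.univ, EP.mlcm g S x ≤ EP.mlcm g T x := fun x _ => Finset.sup_mono h
  funext x
  exact (Finset.sum_eq_sum_iff_of_le hle).1 hs x (Finset.mem_univ x)

theorem bdT_eq_bd (g : Fin r → (Fin n → ℕ)) (j : ℕ) (c : Finset (Fin r) →₀ K)
    (hc : ∀ S, c S ≠ 0 → ∑ x, EP.mlcm g S x = j) (T : Finset (Fin r))
    (hT : ∑ x, EP.mlcm g T x = j) : EP.bdT K g c T = bd (sgn K) c T := by
  rw [bdT_apply]
  unfold bd
  refine Finset.sum_congr rfl fun k _ => ?_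
  by_cases hk : k ∈ T
  · simp [hk]
  by_cases h0 : c (insert k T) = 0
  · simp [h0]
  rw [if_pos (mlcm_eq_of_sum g (Finset.subset_insert k T) (hT.trans (hc _ h0).symm))]

theorem bdT_zero (g : Fin r → (Fin n → ℕ)) (j : ℕ) (c : Finset (Fin r) →₀ K)
    (hc : ∀ S, c S ≠ 0 → ∑ x, EP.mlcm g S x = j) (T : Finset (Fin r))
    (hT : ∑ x, EP.mlcm g T x ≠ j) : EP.bdT K g c T = 0 := by
  rw [bdT_apply]
  refine Finset.sum_eq_zero fun k _ => ?_
  by_cases hk : k ∈ T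
  · simp [hk]
  by_cases h0 : c (insert k T) = 0
  · simp [h0]
  rw [if_neg hk, if_neg]
  intro h
  apply hT
  rw [h, hc _ h0]

theorem torRank_zero (g : Fin r → (Fin n → ℕ)) (p j : ℕ)
    (h : Ex (sgn K) {S | ∑ x, jn g 0 S x = j} p) : EP.torRank K g p j = 0 := by
  classical
  unfold EP.torRank
  have : EP.strand K g p j ⊓ LinearMap.ker (EP.bdT K g) ≤
      Submodule.map (EP.bdT K g) (EP.strand K g (p+1) j) ⊓
          (EP.strand K g p j ⊓ LinearMap.ker (EP.bdT K g)) := by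
    refine le_inf ?_ le_rfl
    rintro c ⟨hc1, hc2⟩
    have hc1 := (mem_strand g p j c).1 hc1
    have hc2 : EP.bdT K g c = 0 := hc2
    simp only [jn_zero] at h
    obtain ⟨b, hb1, hb2⟩ := h c (fun S hS => ⟨(hc1 S hS).2, (hc1 S hS).1⟩) (by
      intro T hT
      rw [← bdT_eq_bd g j c (fun S hS => (hc1 S hS).2) T hT, hc2]
      rfl)
    set b' : Finset (Fin r) →₀ K := Finsupp.equivFunOnFinite.symm b with hb'
    have hbb : (b' : Finset (Fin r) → K) = b := by simp [hb']
    have hb3 : ∀ S, b' S ≠ 0 → ∑ x, EP.mlcm g S x = j := by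
      rw [hbb]; exact fun S hS => (hb1 S hS).1
    refine ⟨b', (mem_strand g (p+1) j b').2 ?_, ?_⟩
    · rw [hbb]
      exact fun S hS => ⟨(hb1 S hS).2, (hb1 S hS).1⟩
    · ext T
      by_cases hT : ∑ x, EP.mlcm g T x = j
      · rw [bdT_eq_bd g j b' hb3 T hT, hbb, hb2 T hT]
      · rw [bdT_zero g j b' hb3 T hT]
        by_contra h0
        exact hT (hc1 T (fun h' => h0 h'.symm)).2
  rw [← le_antisymm this inf_le_right]
  exact Nat.sub_self _

end bridge
section comb

/-- exponent vectors of the minimal generators (`k = t - 2`; cycle `0..k+4`, cone `k+6`). -/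
structure Bk (k s : ℕ) (a : ℕ → ℕ) : Prop where
  sum : ∑ i ∈ Finset.range (k + 7), a i = 2 * s
  adj : ∀ i, i ≤ k + 3 → a i + a (i + 1) ≤ s
  wrap : a 0 + a (k + 4) ≤ s
  iso : a (k + 5) = 0
  cone : a (k + 6) ≤ s

def IsV (k s : ℕ) (a : ℕ → ℕ) : Prop :=
  a 0 < s ∧ a 0 + a 1 = s ∧ a 2 = a 0 ∧ a 0 + a (k + 4) = s

def IsX (k s : ℕ) (a : ℕ → ℕ) : Prop :=
  a 0 + 1 = s ∧ a 1 = 0 ∧ a 2 = s ∧ a (k + 4) = 1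

open Classical in
noncomputable def fl (k s : ℕ) (a : ℕ → ℕ) : ℕ :=
  if IsV k s a then 0 else if IsX k s a then 1 else 2

theorem fl_le (k s : ℕ) (a : ℕ → ℕ) : fl k s a ≤ 2 := by
  unfold fl; split_ifs <;> omega

theorem fl_two {k s : ℕ} {a : ℕ → ℕ} (h1 : ¬ IsV k s a) (h2 : ¬ IsX k s a) : fl k s a = 2 := by
  simp [fl, h1, h2]

theorem fl_X {k s : ℕ} {a : ℕ → ℕ} (h2 : IsX k s a) : fl k s a = 1 := by
  have : ¬ IsV k s a := by
    rintro ⟨h, h', h'', h'''⟩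
    obtain ⟨g1, g2, g3, g4⟩ := h2
    omega
  simp [fl, this, h2]

theorem fl_V {k s : ℕ} {a : ℕ → ℕ} (h2 : IsV k s a) : fl k s a = 0 := by
  simp [fl, h2]

/-- the key comparison: `Lt v u` means `u` comes before `v`. -/
def KLt (k s : ℕ) (v u : ℕ → ℕ) : Prop :=
  v (k + 6) < u (k + 6) ∨ v (k + 6) = u (k + 6) ∧ (v 0 < u 0 ∨ v 0 = u 0 ∧
    (fl k s v < fl k s u ∨ fl k s v = fl k s u ∧
      ∃ p, p < k + 7 ∧ (∀ i, i < p → v i = u i) ∧ v p < u p))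

def mv (a : ℕ → ℕ) (p q : ℕ) : ℕ → ℕ := fun i =>
  if i = p then a i + 1 else if i = q then a i - 1 else a i

def Rs (k : ℕ) (a : ℕ → ℕ) : ℕ := ∑ i ∈ Finset.range (k + 1), a (i + 3)

theorem sum_split (k : ℕ) (a : ℕ → ℕ) : ∑ i ∈ Finset.range (k + 7), a i =
    a 0 + a 1 + a 2 + Rs k a + a (k + 4) + a (k + 5) + a (k + 6) := by
  rw [Finset.sum_range_succ, Finset.sum_range_succ, Finset.sum_range_succ, Finset.sum_range_succ',
    Finset.sum_range_succ', Finset.sum_range_succ']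
  unfold Rs
  simp only [zero_add]
  have : ∀ i, a (i + 1 + 1 + 1) = a (i + 3) := fun i => rfl
  simp only [this]
  norm_num
  ring

theorem le_Rs (k : ℕ) (a : ℕ → ℕ) (i : ℕ) (h : 3 ≤ i) (h' : i ≤ k + 3) : a i ≤ Rs k a := by
  obtain ⟨j, rfl⟩ := Nat.exists_eq_add_of_le' h
  exact Finset.single_le_sum (f := fun i => a (i + 3)) (fun _ _ => Nat.zero_le _)
    (Finset.mem_range.2 (by omega))

theorem le_Rs2 (k : ℕ) (a : ℕ → ℕ) (i j : ℕ) (hij : i ≠ j) (h : 3 ≤ i) (h' : i ≤ k + 3)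
    (g : 3 ≤ j) (g' : j ≤ k + 3) : a i + a j ≤ Rs k a := by
  obtain ⟨i', rfl⟩ := Nat.exists_eq_add_of_le' h
  obtain ⟨j', rfl⟩ := Nat.exists_eq_add_of_le' g
  unfold Rs
  rw [← Finset.sum_pair (f := fun i => a (i + 3)) (a := i') (b := j') (by omega)]
  refine Finset.sum_le_sum_of_subset ?_
  intro x hx
  simp only [Finset.mem_insert, Finset.mem_singleton] at hx
  exact Finset.mem_range.2 (by omega)

theorem Rs_lt (k : ℕ) (v u : ℕ → ℕ) (h : Rs k v < Rs k u) :
    ∃ p, 3 ≤ p ∧ p ≤ k + 3 ∧ v p < u p := by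
  obtain ⟨i, hi, h⟩ := Finset.exists_lt_of_sum_lt h
  have := Finset.mem_range.1 hi
  exact ⟨i + 3, by omega, by omega, h⟩

theorem Rs_pos (k : ℕ) (u : ℕ → ℕ) (h : 0 < Rs k u) :
    ∃ p, 3 ≤ p ∧ p ≤ k + 3 ∧ 0 < u p := by
  have := Rs_lt k (fun _ => 0) u (by simpa [Rs] using h)
  simpa using this

theorem sum_mv (N : ℕ) (a : ℕ → ℕ) (p q : ℕ) (hpq : p ≠ q) (hp : p < N) (hq : q < N)
    (h : 0 < a q) : ∑ i ∈ Finset.range N, mv a p q i = ∑ i ∈ Finset.range N, a i := by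
  have h1 := Finset.add_sum_erase (Finset.range N) (mv a p q) (Finset.mem_range.2 hp)
  have h2 := Finset.add_sum_erase ((Finset.range N).erase p) (mv a p q) (a := q)
    (by simp [hq, hpq.symm])
  have h3 := Finset.add_sum_erase (Finset.range N) a (Finset.mem_range.2 hp)
  have h4 := Finset.add_sum_erase ((Finset.range N).erase p) a (a := q)
    (by simp [hq, hpq.symm])
  have h5 : ∑ x ∈ ((Finset.range N).erase p).erase q, mv a p q x =
      ∑ x ∈ ((Finset.range N).erase p).erase q, a x := by
    refine Finset.sum_congr rfl fun x hx => ?_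
    simp only [Finset.mem_erase] at hx
    simp [mv, hx.1, hx.2.1]
  have h6 : mv a p q p = a p + 1 := by simp [mv]
  have h7 : mv a p q q = a q - 1 := by simp [mv, hpq.symm]
  omega

theorem Bk_mv {k s : ℕ} {a : ℕ → ℕ} (h : Bk k s a) (p q : ℕ) (hpq : p ≠ q) (hp : p < k + 7)
    (hp5 : p ≠ k + 5) (hq : q < k + 7) (hqa : 0 < a q)
    (h1 : p ≤ k + 3 → q = p + 1 ∨ a p + a (p + 1) < s)
    (h2 : ∀ i, p = i + 1 → i ≤ k + 3 → q = i ∨ a i + a p < s)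
    (h3 : p = 0 → q = k + 4 ∨ a 0 + a (k + 4) < s)
    (h4 : p = k + 4 → q = 0 ∨ a 0 + a (k + 4) < s)
    (h5 : p = k + 6 → a (k + 6) < s) : Bk k s (mv a p q) := by
  constructor
  · rw [sum_mv _ _ _ _ hpq hp hq hqa, h.sum]
  · intro i hi
    have h6 := h.adj i hi
    have h8 := h2 i
    unfold mv
    by_cases e1 : i = p
    · subst e1
      have h7 := h1 hi
      split_ifs <;> first | omega | (simp_all <;> omega)
    · by_cases e2 : i + 1 = p
      · subst e2
        have h9 := h8 rfl hi
        split_ifs <;> first | omega | (simp_all <;> omega)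
      · simp only [e1, e2, if_false]
        split_ifs <;> omega
  · have := h.wrap
    unfold mv
    by_cases e1 : 0 = p
    · subst e1
      have h7 := h3 rfl
      split_ifs <;> first | omega | (simp_all <;> omega)
    · by_cases e2 : k + 4 = p
      · subst e2
        have h9 := h4 rfl
        split_ifs <;> first | omega | (simp_all <;> omega)
      · simp only [e1, e2, if_false]
        split_ifs <;> omega
  · have := h.iso
    unfold mv
    split_ifs <;> omega
  · have := h.cone
    unfold mv
    split_ifs with e1
    · have := h5 e1.symm; omega
    · omega
    · omega

theorem mv_p (a : ℕ → ℕ) (p q : ℕ) : mv a p q p = a p + 1 := by simp [mv]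
theorem mv_q (a : ℕ → ℕ) (p q : ℕ) (h : p ≠ q) : mv a p q q = a q - 1 := by simp [mv, h.symm]
theorem mv_o (a : ℕ → ℕ) (p q i : ℕ) (h : i ≠ p) (h' : i ≠ q) : mv a p q i = a i := by
  simp [mv, h, h']

/-- vectors with flag < 2 vanish on the outside. -/
theorem IsV.zero {k s : ℕ} {a : ℕ → ℕ} (h : Bk k s a) (hv : IsV k s a) :
    Rs k a = 0 ∧ a (k + 6) = 0 := by
  have := h.sum
  rw [sum_split] at this
  obtain ⟨h1, h2, h3, h4⟩ := hv
  omega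

theorem IsX.zero {k s : ℕ} {a : ℕ → ℕ} (h : Bk k s a) (hv : IsX k s a) :
    Rs k a = 0 ∧ a (k + 6) = 0 := by
  have := h.sum
  rw [sum_split] at this
  obtain ⟨h1, h2, h3, h4⟩ := hv
  omega

theorem fl_two_of_out {k s : ℕ} {a : ℕ → ℕ} (h : Bk k s a) (p : ℕ) (hp : 3 ≤ p) (hp' : p ≤ k + 3)
    (ha : 0 < a p) : fl k s a = 2 := by
  have := le_Rs k a p hp hp'
  apply fl_two
  · intro hv; have := (hv.zero h).1; omega
  · intro hv; have := (hv.zero h).1; omega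

/-- the conclusion of the exchange lemma -/
def Exch (k s : ℕ) (u v : ℕ → ℕ) : Prop :=
  ∃ p q, p ≠ q ∧ p < k + 7 ∧ q < k + 7 ∧ 0 < v q ∧ v p < u p ∧ Bk k s (mv v p q) ∧
    KLt k s v (mv v p q)

/-- a move inside `1..k+4` to the left, where the flag of the result is `2`. -/
theorem KLt_left {k s : ℕ} {v : ℕ → ℕ} (p q : ℕ) (hp : 1 ≤ p) (hpq : p < q) (hq : q ≤ k + 4)
    (hfl : fl k s (mv v p q) = 2) : KLt k s v (mv v p q) := by
  right
  refine ⟨(mv_o _ _ _ _ (by omega) (by omega)).symm, Or.inr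
    ⟨(mv_o _ _ _ _ (by omega) (by omega)).symm, ?_⟩⟩
  rw [hfl]
  rcases lt_or_eq_of_le (fl_le k s v) with h | h
  · exact Or.inl h
  · refine Or.inr ⟨h, p, by omega, fun i hi => ?_, by rw [mv_p]; omega⟩
    exact (mv_o _ _ _ _ (by omega) (by omega)).symm

/-- a move fixing the cone and `0` that increases the flag -/
theorem KLt_flag {k s : ℕ} {v : ℕ → ℕ} (p q : ℕ) (hp : 1 ≤ p) (hp' : p ≤ k + 4) (hq : 1 ≤ q)
    (hq' : q ≤ k + 4)
    (hfl : fl k s v < fl k s (mv v p q)) : KLt k s v (mv v p q) := by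
  right
  exact ⟨(mv_o _ _ _ _ (by omega) (by omega)).symm, Or.inr
    ⟨(mv_o _ _ _ _ (by omega) (by omega)).symm, Or.inl hfl⟩⟩

/-- moving an outside vertex from the last vertex. -/
theorem exch_out_last {k s : ℕ} {u v : ℕ → ℕ} (hv : Bk k s v) (p : ℕ)
    (hp : 3 ≤ p) (hp' : p ≤ k + 3) (hvu : v p < u p) (hl : 0 < v (k + 4))
    (h1 : p = 3 → v 2 + v 3 < s) (h2 : ∀ i, 3 ≤ i → i + 1 ≤ k + 3 → (p = i ∨ p = i + 1) →
      v i + v (i + 1) < s) :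
    Exch k s u v := by
  have hB : Bk k s (mv v p (k + 4)) := by
    refine Bk_mv hv p (k + 4) (by omega) (by omega) (by omega) (by omega) hl ?_ ?_ ?_ ?_ ?_
    · intro _
      by_cases h : p = k + 3
      · left; omega
      · right; exact h2 p hp (by omega) (Or.inl rfl)
    · intro i hi _
      right
      by_cases h : p = 3
      · have := h1 h
        have : i = 2 := by omega
        subst this; subst h; assumption
      · have := h2 i (by omega) (by omega) (Or.inr hi)
        rw [hi]; exact this
    · omega
    · omega
    · omega
  refine ⟨p, k + 4, by omega, by omega, by omega, hl, hvu, hB, ?_⟩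
  exact KLt_left p (k + 4) (by omega) (by omega) le_rfl
    (fl_two_of_out hB p hp hp' (by rw [mv_p]; omega))

/-- the vectors `V` are fine if something increases in `2..k+3` -/
theorem exch_V {k s : ℕ} {u v : ℕ → ℕ} (hv : Bk k s v) (hV : IsV k s v) (p : ℕ)
    (hp : 2 ≤ p) (hp' : p ≤ k + 3) (hvu : v p < u p) : Exch k s u v := by
  obtain ⟨z1, z2⟩ := hV.zero hv
  have hz : ∀ i, 3 ≤ i → i ≤ k + 3 → v i = 0 := fun i h h' => by
    have := le_Rs k v i h h'; omega
  have hV' := hV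
  obtain ⟨h1, h2, h3, h4⟩ := hV
  have z3 := hz 3 le_rfl (by omega)
  rcases eq_or_lt_of_le hp with rfl | hp
  · have hB : Bk k s (mv v 2 1) := by
      refine Bk_mv hv 2 1 (by omega) (by omega) (by omega) (by omega) (by omega) ?_ ?_ ?_ ?_ ?_
      · intro _; right; norm_num; omega
      · intro i hi _; left; omega
      · omega
      · omega
      · omega
    refine ⟨2, 1, by omega, by omega, by omega, by omega, hvu, hB, ?_⟩
    refine KLt_flag 2 1 (by omega) (by omega) (by omega) (by omega) ?_
    rw [fl_V hV']
    have : ¬ IsV k s (mv v 2 1) := by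
      rintro ⟨_, g, _, _⟩
      rw [mv_o _ _ _ 0 (by omega) (by omega), mv_q _ _ _ (by omega)] at g
      omega
    unfold fl
    rw [if_neg this]
    split_ifs <;> omega
  · refine exch_out_last hv p (by omega) hp' hvu (by omega) (fun _ => by omega) ?_
    intro i hi hi' _
    rw [hz i hi (by omega), hz (i + 1) (by omega) hi']
    omega

theorem exists_later {k s : ℕ} {u v : ℕ → ℕ} (hu : Bk k s u) (hv : Bk k s v) (p : ℕ)
    (hp : p < k + 7) (hy : v (k + 6) = u (k + 6)) (heq : ∀ i, i < p → v i = u i)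
    (hlt : v p < u p) : ∃ q, p < q ∧ q ≤ k + 4 ∧ 0 < v q := by
  by_contra hcon
  push Not at hcon
  have : ∑ i ∈ Finset.range (k + 7), v i < ∑ i ∈ Finset.range (k + 7), u i := by
    refine Finset.sum_lt_sum ?_ ⟨p, Finset.mem_range.2 hp, hlt⟩
    intro i hi
    have hi := Finset.mem_range.1 hi
    rcases lt_trichotomy i p with h | h | h
    · exact (heq i h).le
    · subst h; exact hlt.le
    · by_cases h4 : i ≤ k + 4
      · have := hcon i h h4; omega
      · by_cases h5 : i = k + 5
        · subst h5; rw [hv.iso]; omega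
        · have : i = k + 6 := by omega
          subst this; exact hy.le
  rw [hu.sum, hv.sum] at this
  omega

theorem exch_case1 {k s : ℕ} {u v : ℕ → ℕ} (hu : Bk k s u) (hv : Bk k s v)
    (hy : v (k + 6) = u (k + 6)) (h0 : v 0 < u 0) : Exch k s u v := by
  have su := hu.sum
  have sv := hv.sum
  rw [sum_split] at su sv
  have u01 := hu.adj 0 (by omega)
  have v01 := hv.adj 0 (by omega)
  have uw := hu.wrap
  have vw := hv.wrap
  have vc := hv.cone
  have ui := hu.iso
  have vi := hv.iso
  norm_num at u01 v01
  -- generic conclusion for p = 0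
  have gen : ∀ q, 1 ≤ q → q ≤ k + 4 → 0 < v q → (q = 1 ∨ v 0 + v 1 < s) →
      (q = k + 4 ∨ v 0 + v (k + 4) < s) → Exch k s u v := by
    intro q hq hq' hvq h1 h2
    refine ⟨0, q, by omega, by omega, by omega, hvq, h0, ?_, ?_⟩
    · refine Bk_mv hv 0 q (by omega) (by omega) (by omega) (by omega) hvq ?_ ?_ ?_ ?_ ?_
      · intro _; simpa using h1
      · omega
      · intro _; exact h2
      · omega
      · omega
    · right
      refine ⟨(mv_o _ _ _ _ (by omega) (by omega)).symm, Or.inl ?_⟩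
      rw [mv_p]; omega
  by_cases t1 : v 0 + v 1 < s
  · by_cases t2 : v 0 + v (k + 4) < s
    · obtain ⟨q, h1, h2, h3⟩ := exists_later hu hv 0 (by omega) hy (by omega) h0
      exact gen q h1 h2 h3 (Or.inr t1) (Or.inr t2)
    · exact gen (k + 4) (by omega) le_rfl (by omega) (Or.inr t1) (Or.inl rfl)
  by_cases t2 : v 0 + v (k + 4) < s
  · exact gen 1 le_rfl (by omega) (by omega) (Or.inl rfl) (Or.inr t2)
  -- both tight
  have hR : v 2 + Rs k v < u 2 + Rs k u := by omega
  by_cases hR' : Rs k v < Rs k u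
  · obtain ⟨p, hp, hp', hlt⟩ := Rs_lt k v u hR'
    refine exch_out_last hv p hp hp' hlt (by omega) ?_ ?_
    · intro h
      have := le_Rs k v 3 le_rfl (by omega)
      omega
    · intro i hi hi' _
      have := le_Rs2 k v i (i + 1) (by omega) hi (by omega) (by omega) hi'
      omega
  · by_cases hV : v 2 = v 0
    · exact exch_V hv ⟨by omega, by omega, hV, by omega⟩ 2 le_rfl (by omega) (by omega)
    · have h3 := le_Rs k v 3 le_rfl (by omega)
      have hB : Bk k s (mv v 2 (k + 4)) := by
        refine Bk_mv hv 2 (k + 4) (by omega) (by omega) (by omega) (by omega) (by omega)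
          ?_ ?_ ?_ ?_ ?_
        · intro _; right; norm_num; omega
        · intro i hi _
          have : i = 1 := by omega
          subst this
          right; omega
        · omega
        · omega
        · omega
      refine ⟨2, k + 4, by omega, by omega, by omega, by omega, by omega, hB, ?_⟩
      refine KLt_left 2 (k + 4) (by omega) (by omega) le_rfl (fl_two ?_ ?_)
      · rintro ⟨_, _, _, g⟩
        rw [mv_o _ _ _ 0 (by omega) (by omega), mv_q _ _ _ (by omega)] at g
        omega
      · rintro ⟨g, _, _, g'⟩
        rw [mv_o _ _ _ 0 (by omega) (by omega)] at g
        rw [mv_q _ _ _ (by omega)] at g'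
        omega

theorem exch_case2 {k s : ℕ} (hs : 2 ≤ s) {u v : ℕ → ℕ} (hu : Bk k s u) (hv : Bk k s v)
    (hy : v (k + 6) = u (k + 6)) (h0 : v 0 = u 0) (hf : fl k s v < fl k s u) : Exch k s u v := by
  have su := hu.sum
  have sv := hv.sum
  rw [sum_split] at su sv
  have u01 := hu.adj 0 (by omega)
  have u12 := hu.adj 1 (by omega)
  have uw := hu.wrap
  have ui := hu.iso
  have vi := hv.iso
  norm_num at u01 u12
  by_cases hV : IsV k s v
  · have nV : ¬ IsV k s u := fun h => by rw [fl_V hV, fl_V h] at hf; omega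
    obtain ⟨z1, z2⟩ := hV.zero hv
    have hV' := hV
    obtain ⟨h1, h2, h3, h4⟩ := hV
    by_cases hR : 0 < Rs k u
    · obtain ⟨p, hp, hp', hlt⟩ := Rs_lt k v u (by omega)
      exact exch_V hv hV' p (by omega) hp' hlt
    · by_cases h5 : v 2 < u 2
      · exact exch_V hv hV' 2 (by omega) (by omega) h5
      · exact absurd ⟨by omega, by omega, by omega, by omega⟩ nV
  by_cases hX : IsX k s v
  · rw [fl_X hX] at hf
    have nV : ¬ IsV k s u := fun h => by rw [fl_V h] at hf; omega
    have nX : ¬ IsX k s u := fun h => by rw [fl_X h] at hf; omega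
    obtain ⟨z1, z2⟩ := hX.zero hv
    have hz : ∀ i, 3 ≤ i → i ≤ k + 3 → v i = 0 := fun i h h' => by
      have := le_Rs k v i h h'; omega
    have hX' := hX
    obtain ⟨h1, h2, h3, h4⟩ := hX
    by_cases hR : 0 < Rs k u
    · obtain ⟨p, hp, hp', hlt⟩ := Rs_lt k v u (by omega)
      rcases eq_or_lt_of_le hp with rfl | hp
      · have hB : Bk k s (mv v 3 2) := by
          refine Bk_mv hv 3 2 (by omega) (by omega) (by omega) (by omega) (by omega) ?_ ?_ ?_ ?_ ?_
          · intro _; right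
            have z3 := hz 3 le_rfl (by omega)
            norm_num
            by_cases hk : k = 0
            · subst hk; norm_num at h4; omega
            · have := hz 4 (by omega) (by omega); omega
          · intro i hi _; left; omega
          · omega
          · omega
          · omega
        refine ⟨3, 2, by omega, by omega, by omega, by omega, hlt, hB, ?_⟩
        refine KLt_flag 3 2 (by omega) (by omega) (by omega) (by omega) ?_
        rw [fl_X hX', fl_two_of_out hB 3 le_rfl (by omega) (by rw [mv_p]; omega)]
        omega
      · refine exch_out_last hv p (by omega) hp' hlt (by omega) (by omega) ?_
        intro i hi hi' _
        rw [hz i hi (by omega), hz (i + 1) (by omega) hi']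
        omega
    · exfalso
      by_cases h5 : u 1 = 0
      · exact nX ⟨by omega, by omega, by omega, by omega⟩
      · exact nV ⟨by omega, by omega, by omega, by omega⟩
  rw [fl_two hV hX] at hf
  have := fl_le k s u
  omega

theorem mv_inv {v : ℕ → ℕ} {p q : ℕ} (hpq : p ≠ q) (hq : 0 < v q) :
    v p + 1 = mv v p q p ∧ v q = mv v p q q + 1 ∧ ∀ i, i ≠ p → i ≠ q → v i = mv v p q i := by
  refine ⟨(mv_p _ _ _).symm, ?_, fun i h h' => (mv_o _ _ _ _ h h').symm⟩
  rw [mv_q _ _ _ hpq]; omega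

theorem exch_case3 {k s : ℕ} (hs : 2 ≤ s) {u v : ℕ → ℕ} (hu : Bk k s u) (hv : Bk k s v)
    (hy : v (k + 6) = u (k + 6)) (h0 : v 0 = u 0) (nVv : ¬ IsV k s v) (nXv : ¬ IsX k s v)
    (nVu : ¬ IsV k s u) (nXu : ¬ IsX k s u) (p : ℕ) (hp : p < k + 7)
    (heq : ∀ i, i < p → v i = u i) (hlt : v p < u p) : Exch k s u v := by
  have su := hu.sum
  have sv := hv.sum
  rw [sum_split] at su sv
  have u01 := hu.adj 0 (by omega)
  have u12 := hu.adj 1 (by omega)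
  have u23 := hu.adj 2 (by omega)
  have v01 := hv.adj 0 (by omega)
  have v12 := hv.adj 1 (by omega)
  have v23 := hv.adj 2 (by omega)
  have uw := hu.wrap
  have vw := hv.wrap
  have ui := hu.iso
  have vi := hv.iso
  norm_num at u01 u12 u23 v01 v12 v23
  have hp1 : 1 ≤ p := by
    rcases Nat.eq_zero_or_pos p with h | h
    · subst h; omega
    · exact h
  obtain ⟨q0, hq1, hq2, hq3⟩ := exists_later hu hv p hp hy heq hlt
  -- the basic move
  obtain ⟨q, hpq, hq, hvq, hqt⟩ : ∃ q, p < q ∧ q ≤ k + 4 ∧ 0 < v q ∧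
      (q = p + 1 ∨ v p + v (p + 1) < s) := by
    by_cases h : v p + v (p + 1) < s
    · exact ⟨q0, hq1, hq2, hq3, Or.inr h⟩
    · have := hu.adj p (by omega)
      exact ⟨p + 1, by omega, by omega, by omega, Or.inl rfl⟩
  -- general feasibility for the move from q' to p
  have gen : ∀ q', p < q' → q' ≤ k + 4 → 0 < v q' → (q' = p + 1 ∨ v p + v (p + 1) < s) →
      Bk k s (mv v p q') := by
    intro q' h1 h2 h3 h4
    refine Bk_mv hv p q' (by omega) (by omega) (by omega) (by omega) h3 ?_ ?_ ?_ ?_ ?_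
    · intro _; exact h4
    · intro i hi hi'
      right
      have := hu.adj i hi'
      have := heq i (by omega)
      subst hi
      omega
    · omega
    · omega
    · omega
  have fin : ∀ q', p < q' → q' ≤ k + 4 → 0 < v q' → (q' = p + 1 ∨ v p + v (p + 1) < s) →
      fl k s (mv v p q') = 2 → Exch k s u v := by
    intro q' h1 h2 h3 h4 h5
    exact ⟨p, q', by omega, by omega, by omega, h3, hlt, gen q' h1 h2 h3 h4,
      KLt_left p q' hp1 h1 h2 h5⟩
  have hB := gen q hpq hq hvq hqt
  obtain ⟨i1, i2, i3⟩ := mv_inv (v := v) (p := p) (q := q) (by omega) hvq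
  by_cases hV : IsV k s (mv v p q)
  · obtain ⟨z1, z2⟩ := hV.zero hB
    have hz : ∀ i, 3 ≤ i → i ≤ k + 3 → mv v p q i = 0 := fun i h h' => by
      have := le_Rs k (mv v p q) i h h'; omega
    obtain ⟨g1, g2, g3, g4⟩ := hV
    rw [← i3 0 (by omega) (by omega)] at g1 g2 g3 g4
    have hp2 : p = 1 ∨ p = 2 := by
      by_contra h
      have := hz p (by omega) (by omega)
      omega
    have hq4 : q ≠ k + 4 := by
      rintro rfl
      omega
    rw [← i3 (k + 4) (by omega) (by omega)] at g4
    rcases hp2 with rfl | rfl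
    · by_cases hq2 : q = 2
      · subst hq2
        -- v = X_{c,c+1}
        have hc : v 0 + 2 ≤ s := by
          by_contra h
          exact nXv ⟨by omega, by omega, by omega, by omega⟩
        have hvz : ∀ i, 3 ≤ i → i ≤ k + 3 → v i = 0 := fun i h h' => by
          rw [i3 i (by omega) (by omega), hz i h h']
        have hR : 0 < Rs k u := by
          by_contra h
          exact nVu ⟨by omega, by omega, by omega, by omega⟩
        obtain ⟨r, hr, hr', hrp⟩ := Rs_pos k u hR
        refine exch_out_last hv r hr hr' (by rw [hvz r hr hr']; exact hrp) (by omega) ?_ ?_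
        · intro _
          rw [hvz 3 le_rfl (by omega)]; omega
        · intro i hi hi' _
          rw [hvz i hi (by omega), hvz (i + 1) (by omega) hi']; omega
      · rw [← i3 2 (by omega) (by omega)] at g3
        have hB' := gen (k + 4) (by omega) le_rfl (by omega) (Or.inr (by norm_num; omega))
        refine fin (k + 4) (by omega) le_rfl (by omega) (Or.inr (by norm_num; omega)) ?_
        refine fl_two_of_out hB' q (by omega) (by omega) ?_
        rw [mv_o _ _ _ _ (by omega) (by omega)]; exact hvq
    · have hv3 : v 3 ≤ 1 := by
        have := hz 3 le_rfl (by omega)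
        by_cases h : q = 3
        · subst h; omega
        · rw [i3 3 (by omega) (by omega)]; omega
      have hB' := gen (k + 4) (by omega) le_rfl (by omega) (Or.inr (by norm_num; omega))
      refine fin (k + 4) (by omega) le_rfl (by omega) (Or.inr (by norm_num; omega)) ?_
      refine fl_two_of_out hB' q (by omega) (by omega) ?_
      rw [mv_o _ _ _ _ (by omega) (by omega)]; exact hvq
  by_cases hX : IsX k s (mv v p q)
  · obtain ⟨z1, z2⟩ := hX.zero hB
    have hz : ∀ i, 3 ≤ i → i ≤ k + 3 → mv v p q i = 0 := fun i h h' => by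
      have := le_Rs k (mv v p q) i h h'; omega
    obtain ⟨g1, g2, g3, g4⟩ := hX
    rw [← i3 0 (by omega) (by omega)] at g1
    have hp2 : p = 2 := by
      by_contra h
      by_cases h1 : p = 1
      · subst h1; omega
      · have := hz p (by omega) (by omega)
        omega
    subst hp2
    have hq4 : q ≠ k + 4 := by
      rintro rfl
      omega
    rw [← i3 (k + 4) (by omega) (by omega)] at g4
    rw [← i3 1 (by omega) (by omega)] at g2
    by_cases hq3 : q = 3
    · subst hq3
      have z3 := hz 3 le_rfl (by omega)
      have u1 := heq 1 (by omega)
      have u6 : v (k + 6) = 0 := by rw [i3 (k + 6) (by omega) (by omega), z2]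
      have hvz : ∀ i, 4 ≤ i → i ≤ k + 3 → v i = 0 := fun i h h' => by
          rw [i3 i (by omega) (by omega), hz i (by omega) h']
      have hR : 0 < Rs k u := by
        by_contra h
        exact nXu ⟨by omega, by omega, by omega, by omega⟩
      obtain ⟨r, hr, hr', hrp⟩ := Rs_pos k u hR
      have hr3 : r ≠ 3 := by
        rintro rfl; omega
      refine exch_out_last hv r hr hr' (by rw [hvz r (by omega) hr']; exact hrp) (by omega)
        (fun h => absurd h hr3) ?_
      intro i hi hi' _
      rw [hvz (i + 1) (by omega) hi']
      by_cases h3 : i = 3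
      · subst h3; omega
      · rw [hvz i (by omega) (by omega)]; omega
    · have v3 : v 3 = 0 := by
        rw [i3 3 (by omega) (by omega), hz 3 le_rfl (by omega)]
      have hB' := gen (k + 4) (by omega) le_rfl (by omega) (Or.inr (by norm_num; omega))
      refine fin (k + 4) (by omega) le_rfl (by omega) (Or.inr (by norm_num; omega)) ?_
      refine fl_two_of_out hB' q (by omega) (by omega) ?_
      rw [mv_o _ _ _ _ (by omega) (by omega)]; exact hvq
  exact fin q hpq hq hvq hqt (fl_two hV hX)

theorem exch {k s : ℕ} (hs : 2 ≤ s) {u v : ℕ → ℕ} (hu : Bk k s u) (hv : Bk k s v)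
    (h : KLt k s v u) : Exch k s u v := by
  rcases h with h | ⟨hy, h | ⟨h0, h | ⟨hf, p, hp, heq, hlt⟩⟩⟩
  · -- cone vertex
    have hc := hu.cone
    have : ∃ q, q < k + 6 ∧ 0 < v q := by
      by_contra hcon
      push Not at hcon
      have sv := hv.sum
      rw [Finset.sum_range_succ, Finset.sum_eq_zero] at sv
      · omega
      · intro i hi
        have := hcon i (Finset.mem_range.1 hi)
        omega
    obtain ⟨q, hq, hvq⟩ := this
    refine ⟨k + 6, q, by omega, by omega, by omega, hvq, h, ?_, Or.inl ?_⟩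
    · refine Bk_mv hv (k + 6) q (by omega) (by omega) (by omega) (by omega) hvq ?_ ?_ ?_ ?_ ?_
      all_goals omega
    · rw [mv_p]; omega
  · exact exch_case1 hu hv hy h
  · exact exch_case2 hs hu hv hy h0 h
  · have su := hu.sum
    have sv := hv.sum
    by_cases hV : IsV k s v
    · exfalso
      have hVu : IsV k s u := by
        by_contra hn
        rw [fl_V hV] at hf
        unfold fl at hf
        rw [if_neg hn] at hf
        split_ifs at hf
      obtain ⟨z1, z2⟩ := hV.zero hv
      obtain ⟨z3, z4⟩ := hVu.zero hu
      have a1 := le_Rs k v p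
      have a2 := le_Rs k u p
      have ui := hu.iso
      obtain ⟨g1, g2, g3, g4⟩ := hV
      obtain ⟨f1, f2, f3, f4⟩ := hVu
      have : p = 0 ∨ p = 1 ∨ p = 2 ∨ (3 ≤ p ∧ p ≤ k + 3) ∨ p = k + 4 ∨ p = k + 5 ∨ p = k + 6 := by
        omega
      rcases this with rfl | rfl | rfl | h | rfl | rfl | rfl <;> omega
    by_cases hX : IsX k s v
    · exfalso
      have hXu : IsX k s u := by
        by_contra hn
        rw [fl_X hX] at hf
        unfold fl at hf
        rw [if_neg hn] at hf
        split_ifs at hf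
        omega
      obtain ⟨z1, z2⟩ := hX.zero hv
      obtain ⟨z3, z4⟩ := hXu.zero hu
      have a1 := le_Rs k v p
      have a2 := le_Rs k u p
      have ui := hu.iso
      obtain ⟨g1, g2, g3, g4⟩ := hX
      obtain ⟨f1, f2, f3, f4⟩ := hXu
      have : p = 0 ∨ p = 1 ∨ p = 2 ∨ (3 ≤ p ∧ p ≤ k + 3) ∨ p = k + 4 ∨ p = k + 5 ∨ p = k + 6 := by
        omega
      rcases this with rfl | rfl | rfl | h | rfl | rfl | rfl <;> omega
    rw [fl_two hV hX] at hf
    refine exch_case3 hs hu hv hy h0 hV hX ?_ ?_ p hp heq hlt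
    · intro h; rw [fl_V h] at hf; omega
    · intro h; rw [fl_X h] at hf; omega

end comb
section fact

/-- ordered edges of `G`. -/
def E0 (k i j : ℕ) : Prop :=
  (j = k + 6 ∧ i ≤ k + 4) ∨ (j ≤ k + 4 ∧ i + 2 ≤ j ∧ ¬ (i = 0 ∧ j = k + 4))

theorem Bk.step {k s : ℕ} {a : ℕ → ℕ} (h : Bk k s a) {i j : ℕ} (hE : E0 k i j) :
    Bk k (s + 1) (fun x => a x + (if x = i then 1 else 0) + (if x = j then 1 else 0)) := by
  unfold E0 at hE
  constructor
  · rw [Finset.sum_add_distrib, Finset.sum_add_distrib, h.sum, Finset.sum_ite_eq',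
      Finset.sum_ite_eq', if_pos (Finset.mem_range.2 (by omega)),
      if_pos (Finset.mem_range.2 (by omega))]
    ring
  · intro x hx
    have := h.adj x hx
    split_ifs <;> omega
  · have := h.wrap
    split_ifs <;> omega
  · have := h.iso
    split_ifs <;> omega
  · have := h.cone
    split_ifs <;> omega

def Cy (k i j : ℕ) : Prop :=
  i ≤ k + 4 ∧ j ≤ k + 4 ∧ (j = i + 1 ∨ i = j + 1 ∨ (i = 0 ∧ j = k + 4) ∨ (i = k + 4 ∧ j = 0))

theorem Cy.symm {k i j : ℕ} (h : Cy k i j) : Cy k j i := by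
  unfold Cy at *; omega

theorem Bk.cyc {k s : ℕ} {a : ℕ → ℕ} (h : Bk k s a) {i j : ℕ} (hc : Cy k i j) :
    a i + a j ≤ s := by
  have h1 := h.adj i
  have h2 := h.adj j
  have h3 := h.wrap
  obtain ⟨hi, hj, rfl | rfl | ⟨rfl, rfl⟩ | ⟨rfl, rfl⟩⟩ := hc <;> omega

theorem Bk.sub_le {k s : ℕ} {a : ℕ → ℕ} (h : Bk k s a) (T : Finset ℕ)
    (hT : ∀ x ∈ T, x ≤ k + 4) : ∑ x ∈ T, a x + a (k + 6) ≤ 2 * s := by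
  have h1 := h.sum
  rw [Finset.sum_range_succ, Finset.sum_range_succ] at h1
  have h2 : ∑ x ∈ T, a x ≤ ∑ x ∈ Finset.range (k + 5), a x :=
    Finset.sum_le_sum_of_subset (fun x hx => Finset.mem_range.2 (by have := hT x hx; omega))
  omega

theorem Bk.pick {k s : ℕ} {a : ℕ → ℕ} (h : Bk k s a) (hc : 0 < a (k + 6)) :
    ∃ j, j ≤ k + 4 ∧ 0 < a j ∧ ∀ l m, Cy k l m → a l + a m = s → l = j ∨ m = j := by
  have hs : 0 < s := by have := h.cone; omega
  have H2 : ∀ p q, p ≤ k + 4 → q ≤ k + 4 → p ≠ q → a p + a q < 2 * s := by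
    intro p q hp hq hpq
    have := h.sub_le {p, q} (by simp [hp, hq])
    rw [Finset.sum_pair hpq] at this
    omega
  have H4 : ∀ i j l m, Cy k i j → Cy k l m → a i + a j = s → a l + a m = s →
      l = i ∨ l = j ∨ m = i ∨ m = j := by
    intro i j l m c1 c2 t1 t2
    by_contra hn
    push Not at hn
    obtain ⟨n1, n2, n3, n4⟩ := hn
    have n5 : i ≠ j := by unfold Cy at c1; omega
    have n6 : l ≠ m := by unfold Cy at c2; omega
    have := h.sub_le {i, j, l, m} (by
      have := c1.1; have := c1.2.1; have := c2.1; have := c2.2.1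
      simp; omega)
    rw [Finset.sum_insert (by simp; omega), Finset.sum_insert (by simp; omega),
      Finset.sum_pair n6] at this
    omega
  by_cases hT : ∃ p q, Cy k p q ∧ a p + a q = s
  · obtain ⟨p, q, c, t⟩ := hT
    have cp := c.1
    have cq := c.2.1
    have npq : p ≠ q := by unfold Cy at c; omega
    by_cases hp0 : a p = 0
    · refine ⟨q, cq, by omega, fun l m c' t' => ?_⟩
      by_contra hn
      push Not at hn
      have := H2 l q c'.1 cq hn.1
      have := H2 m q c'.2.1 cq hn.2
      rcases H4 p q l m c c' t t' with rfl | rfl | rfl | rfl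
      · omega
      · exact hn.1 rfl
      · omega
      · exact hn.2 rfl
    · by_cases hall : ∀ l m, Cy k l m → a l + a m = s → l = p ∨ m = p
      · exact ⟨p, cp, by omega, hall⟩
      · have : ∃ m, Cy k q m ∧ a q + a m = s ∧ m ≠ p := by
          push Not at hall
          obtain ⟨l, m, c', t', n1, n2⟩ := hall
          rcases H4 p q l m c c' t t' with rfl | rfl | rfl | rfl
          · exact absurd rfl n1
          · exact ⟨m, c', t', n2⟩
          · exact absurd rfl n2
          · exact ⟨l, c'.symm, by omega, n1⟩
        obtain ⟨m, c', t', n1⟩ := this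
        have := H2 m p c'.2.1 cp n1
        refine ⟨q, cq, by omega, fun l' m' c'' t'' => ?_⟩
        by_contra hn
        push Not at hn
        have a1 := H4 p q l' m' c c'' t t''
        have a2 := H4 q m l' m' c' c'' t' t''
        unfold Cy at c c' c''
        omega
  · push Not at hT
    have : ∃ j, j ≤ k + 4 ∧ 0 < a j := by
      by_contra hn
      push Not at hn
      have h1 := h.sum
      rw [Finset.sum_range_succ, Finset.sum_range_succ, Finset.sum_eq_zero (fun x hx => by
        have := Finset.mem_range.1 hx
        have := hn x (by omega)
        omega)] at h1
      have := h.iso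
      have := h.cone
      omega
    obtain ⟨j, hj, h0⟩ := this
    exact ⟨j, hj, h0, fun l m c t => absurd t (hT l m c)⟩

/-- removing a cone edge. -/
theorem Bk.unstep {k s : ℕ} {a : ℕ → ℕ} (h : Bk k (s + 1) a) (hc : 0 < a (k + 6)) :
    ∃ b j, j ≤ k + 4 ∧ Bk k s b ∧
      a = (fun x => b x + (if x = j then 1 else 0) + (if x = k + 6 then 1 else 0)) := by
  obtain ⟨j, hj, h0, hall⟩ := h.pick hc
  have ha : a = (fun x => (a x - (if x = j then 1 else 0) - (if x = k + 6 then 1 else 0)) +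
      (if x = j then 1 else 0) + (if x = k + 6 then 1 else 0)) := by
    funext x
    by_cases h1 : x = j
    · subst h1
      rw [if_pos rfl, if_neg (by omega)]; omega
    · by_cases h2 : x = k + 6
      · subst h2
        rw [if_neg h1, if_pos rfl]; omega
      · simp [h1, h2]
  refine ⟨_, j, hj, ?_, ha⟩
  have key : ∀ l m, Cy k l m → (a l - (if l = j then 1 else 0) - (if l = k + 6 then 1 else 0)) +
      (a m - (if m = j then 1 else 0) - (if m = k + 6 then 1 else 0)) ≤ s := by
    intro l m c
    have h1 := h.cyc c
    have h2 := hall l m c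
    have c1 := c.1
    have c2 := c.2.1
    rw [if_neg (by omega : ¬ l = k + 6), if_neg (by omega : ¬ m = k + 6)]
    by_cases hl : l = j
    · subst hl
      rw [if_pos rfl]
      split_ifs <;> omega
    · by_cases hm : m = j
      · subst hm
        rw [if_pos rfl]
        split_ifs; omega
      · rw [if_neg hl, if_neg hm]
        omega
  constructor
  · have h1 := h.sum
    rw [ha, Finset.sum_add_distrib, Finset.sum_add_distrib, Finset.sum_ite_eq',
      Finset.sum_ite_eq', if_pos (Finset.mem_range.2 (by omega)),
      if_pos (Finset.mem_range.2 (by omega))] at h1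
    omega
  · exact fun i hi => key i (i + 1) ⟨by omega, by omega, by omega⟩
  · exact key 0 (k + 4) ⟨by omega, by omega, by omega⟩
  · simp [h.iso]
  · have := h.cone
    rw [if_neg (by omega), if_pos rfl]
    omega

theorem pow_mem_zero {R : Type} [CommRing R] (I : Ideal R) (Y : ℕ → R) (k : ℕ)
    (hY : ∀ i j, E0 k i j → Y i * Y j ∈ I) (s : ℕ) (a : ℕ → ℕ) (h : Bk k s a)
    (hc : a (k + 6) = 0) : ∏ i ∈ Finset.range (k + 7), Y i ^ a i ∈ I ^ s := by
  set P : ℕ → ℕ := fun i => ∑ x ∈ Finset.range i, a x with hP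
  have Ps : ∀ i, P (i + 1) = P i + a i := fun i => Finset.sum_range_succ _ _
  have P0 : P 0 = 0 := rfl
  have PN : P (k + 7) = 2 * s := h.sum
  have Pm : Monotone P := monotone_nat_of_le_succ fun i => by rw [Ps]; omega
  have hz : ∀ l, ∃ z, l < 2 * s → z < k + 7 ∧ P z ≤ l ∧ l < P (z + 1) := by
    intro l
    by_cases hl : l < 2 * s
    · have hex : ∃ i, l < P (i + 1) := ⟨k + 6, by rw [PN]; exact hl⟩
      classical
      refine ⟨Nat.find hex, fun _ => ⟨?_, ?_, Nat.find_spec hex⟩⟩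
      · have : Nat.find hex ≤ k + 6 := Nat.find_min' hex (by rw [PN]; exact hl)
        omega
      · rcases hn : Nat.find hex with _ | m
        · rw [P0]; omega
        · have := Nat.find_min hex (m := m) (by omega)
          omega
    · exact ⟨0, fun h => absurd h hl⟩
  choose z hz using hz
  have hprod : ∏ i ∈ Finset.range (k + 7), Y i ^ a i = ∏ l ∈ Finset.range (2 * s), Y (z l) := by
    rw [← Finset.prod_fiberwise_of_maps_to (s := Finset.range (2 * s))
      (t := Finset.range (k + 7)) (g := z)]
    · refine Finset.prod_congr rfl fun i hi => ?_
      rw [Finset.prod_congr rfl (g := fun _ => Y i), Finset.prod_const]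
      · congr 1
        have : (Finset.range (2 * s)).filter (fun l => z l = i) = Finset.Ico (P i) (P (i + 1)) := by
          ext l
          simp only [Finset.mem_filter, Finset.mem_range, Finset.mem_Ico]
          have hi := Finset.mem_range.1 hi
          constructor
          · rintro ⟨h1, rfl⟩
            exact (hz l h1).2
          · rintro ⟨h1, h2⟩
            have h3 : l < 2 * s := by
              have := Pm (show i + 1 ≤ k + 7 by omega)
              omega
            refine ⟨h3, ?_⟩
            obtain ⟨_, h4, h5⟩ := hz l h3
            by_contra hne
            rcases Nat.lt_or_gt_of_ne hne with h6 | h6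
            · have := Pm (show z l + 1 ≤ i by omega)
              omega
            · have := Pm (show i + 1 ≤ z l by omega)
              omega
        rw [this, Nat.card_Ico, Ps]
        omega
      · intro l hl
        rw [(Finset.mem_filter.1 hl).2]
    · intro l hl
      exact Finset.mem_range.2 (hz l (Finset.mem_range.1 hl)).1
  rw [hprod, two_mul, Finset.prod_range_add, ← Finset.prod_mul_distrib]
  have : I ^ s = ∏ _l ∈ Finset.range s, I := by simp
  rw [this]
  refine Ideal.prod_mem_prod fun l hl => hY _ _ ?_
  have hl := Finset.mem_range.1 hl
  obtain ⟨u1, u2, u3⟩ := hz l (by omega)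
  obtain ⟨w1, w2, w3⟩ := hz (s + l) (by omega)
  have iso := h.iso
  have e6 : P (k + 6) = P (k + 5) + a (k + 5) := Ps _
  have e7 : P (k + 7) = P (k + 6) + a (k + 6) := Ps _
  have e5 : P (k + 5) = P (k + 4) + a (k + 4) := Ps _
  have q1 : z (s + l) ≤ k + 4 := by
    by_contra hn
    have := Pm (show k + 5 ≤ z (s + l) by omega)
    omega
  refine Or.inr ⟨q1, ?_, ?_⟩
  · by_contra hn
    have m1 := Pm (show z (s + l) + 1 ≤ z l + 1 + 1 by omega)
    have m2 := Ps (z l + 1)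
    have m3 := Ps (z l)
    have m4 : z l ≤ k + 4 := by
      by_contra hn
      have := Pm (show k + 5 ≤ z l by omega)
      omega
    by_cases h7 : z l = k + 4
    · have := h.adj (k + 3) (by omega)
      rw [h7] at m1 m2 m3 u2
      have : a (k + 3 + 1) = a (k + 4) := rfl
      have : a (k + 4 + 1) = a (k + 5) := rfl
      omega
    · have := h.adj (z l) (by omega)
      omega
  · rintro ⟨h1, h2⟩
    rw [h1] at u3
    rw [h2] at w2
    have : P (0 + 1) = P 0 + a 0 := Ps 0
    have := h.wrap
    omega

theorem pow_mem {R : Type} [CommRing R] (I : Ideal R) (Y : ℕ → R) (k : ℕ)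
    (hY : ∀ i j, E0 k i j → Y i * Y j ∈ I) (s : ℕ) (a : ℕ → ℕ) (h : Bk k s a) :
    ∏ i ∈ Finset.range (k + 7), Y i ^ a i ∈ I ^ s := by
  induction s generalizing a with
  | zero => simp
  | succ s ih =>
    by_cases hc : a (k + 6) = 0
    · exact pow_mem_zero I Y k hY _ a h hc
    · obtain ⟨b, j, hj, hb, rfl⟩ := h.unstep (by omega)
      simp only [pow_add, Finset.prod_mul_distrib, pow_ite, pow_one, pow_zero]
      rw [Finset.prod_ite_eq', Finset.prod_ite_eq', if_pos (Finset.mem_range.2 (by omega)),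
        if_pos (Finset.mem_range.2 (by omega)), mul_assoc]
      exact Ideal.mul_mem_mul (ih b hb) (by
        exact hY _ _ (Or.inl ⟨rfl, hj⟩))

end fact
section fin

def xt (k : ℕ) (v : Fin (k + 2 + 5) → ℕ) (i : ℕ) : ℕ :=
  if h : i < k + 2 + 5 then v ⟨i, h⟩ else 0

theorem xt_val (k : ℕ) (v : Fin (k + 2 + 5) → ℕ) (x : Fin (k + 2 + 5)) : xt k v x = v x := by
  simp [xt]

theorem xt_lt (k : ℕ) (v : Fin (k + 2 + 5) → ℕ) (i : ℕ) (h : i < k + 2 + 5) :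
    xt k v i = v ⟨i, h⟩ := by
  simp [xt, h]

theorem xt_restrict (k : ℕ) (a : ℕ → ℕ) (h : ∀ i, k + 2 + 5 ≤ i → a i = 0) :
    xt k (fun x => a x) = a := by
  funext i
  unfold xt
  split_ifs with h1
  · rfl
  · exact (h i (by omega)).symm

theorem xt_sum (k : ℕ) (v : Fin (k + 2 + 5) → ℕ) :
    ∑ x, v x = ∑ i ∈ Finset.range (k + 7), xt k v i := by
  rw [Finset.sum_range (n := k + 2 + 5)]
  exact Finset.sum_congr rfl fun x _ => (xt_val k v x).symm

theorem adj_iff (k : ℕ) (G : SimpleGraph (Fin (k + 2 + 5))) (hG : Gᶜ = Gb (k + 2))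
    (i j : Fin (k + 2 + 5)) : G.Adj i j ↔ E0 k i j ∨ E0 k j i := by
  have h : Gᶜ.Adj i j ↔ (Gb (k + 2)).Adj i j := by rw [hG]
  rw [SimpleGraph.compl_adj] at h
  have h1 : G.Adj i j → i ≠ j := fun h => h.ne
  unfold Gb at h
  rw [SimpleGraph.fromRel_adj] at h
  unfold E0
  have hi := i.2
  have hj := j.2
  have hne : i ≠ j ↔ (i : ℕ) ≠ j := by rw [Ne, Fin.ext_iff]
  rw [hne] at h h1
  by_cases hA : G.Adj i j
  · simp only [hA, not_true, and_false, false_iff] at h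
    have := h1 hA
    simp only [hA, true_iff]
    omega
  · simp only [hA, not_false_iff, and_true] at h
    simp only [hA, false_iff]
    omega

variable {K : Type} [Field K]

theorem mono_mul {n : ℕ} (a b : Fin n → ℕ) : EP.mono K a * EP.mono K b = EP.mono K (a + b) := by
  unfold EP.mono
  rw [MvPolynomial.monomial_mul, one_mul]
  congr 2
  ext x
  simp

theorem mono_X {n : ℕ} (i : Fin n) :
    (MvPolynomial.X i : MvPolynomial (Fin n) K) = EP.mono K (fun x => if x = i then 1 else 0) := by
  unfold EP.mono MvPolynomial.X
  congr 2
  ext x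
  simp [Finsupp.single_apply, eq_comm]

theorem mono_prod (k : ℕ) (v : Fin (k + 2 + 5) → ℕ) :
    EP.mono K v = ∏ i ∈ Finset.range (k + 7),
      (fun i => if h : i < k + 2 + 5 then (MvPolynomial.X ⟨i, h⟩ : MvPolynomial _ K) else 0) i
        ^ xt k v i := by
  rw [Finset.prod_range (n := k + 2 + 5)]
  unfold EP.mono
  rw [MvPolynomial.monomial_eq, Finsupp.prod_fintype _ _ (by simp)]
  simp [xt_val]

theorem mono_mem_span {n : ℕ} (T : Set (Fin n → ℕ)) (v : Fin n → ℕ) :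
    EP.mono K v ∈ Ideal.span (EP.mono K '' T) ↔ ∃ w ∈ T, ∀ x, w x ≤ v x := by
  have : EP.mono K '' T = (fun s => MvPolynomial.monomial s (1 : K)) ''
      (Finsupp.equivFunOnFinite.symm '' T) := by
    rw [Set.image_image]; rfl
  rw [this, MvPolynomial.mem_ideal_span_monomial_image]
  classical
  unfold EP.mono
  simp only [MvPolynomial.support_monomial, one_ne_zero, if_false, Finset.mem_singleton,
    forall_eq, Set.exists_mem_image]
  rfl

theorem mono_mem_pow (k : ℕ) (G : SimpleGraph (Fin (k + 2 + 5))) (hG : Gᶜ = Gb (k + 2)) (s : ℕ)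
    (v : Fin (k + 2 + 5) → ℕ) (h : Bk k s (xt k v)) :
    EP.mono K v ∈ EP.edgeIdeal K G ^ s := by
  rw [mono_prod]
  refine pow_mem _ _ k ?_ s _ h
  intro i j hE
  have h1 : i < k + 2 + 5 ∧ j < k + 2 + 5 := by unfold E0 at hE; omega
  simp only [h1.1, h1.2, dif_pos]
  exact Ideal.subset_span ⟨_, _, (adj_iff k G hG _ _).2 (Or.inl hE), rfl⟩

theorem pow_le (k : ℕ) (G : SimpleGraph (Fin (k + 2 + 5))) (hG : Gᶜ = Gb (k + 2)) (s : ℕ) :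
    EP.edgeIdeal K G ^ s ≤ Ideal.span (EP.mono K '' {v | Bk k s (xt k v)}) := by
  induction s with
  | zero =>
    rw [pow_zero, Ideal.one_eq_top, top_le_iff, Ideal.eq_top_iff_one]
    refine Ideal.subset_span ⟨0, ?_, ?_⟩
    · have : xt k 0 = fun _ => 0 := by funext i; simp [xt]
      simp only [Set.mem_ofPred_eq, this]
      constructor <;> simp
    · unfold EP.mono
      have : Finsupp.equivFunOnFinite.symm (0 : Fin (k + 2 + 5) → ℕ) = 0 := by ext x; simp
      rw [this]
      exact MvPolynomial.C_1 (R := K)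
  | succ s ih =>
    rw [pow_succ]
    refine (Ideal.mul_mono_left ih).trans ?_
    unfold EP.edgeIdeal
    rw [Ideal.span_mul_span', Ideal.span_le]
    rintro _ ⟨_, ⟨v, hv, rfl⟩, _, ⟨i, j, hij, rfl⟩, rfl⟩
    refine Ideal.subset_span ⟨_, ?_, by
      show _ = EP.mono K v * (MvPolynomial.X i * MvPolynomial.X j)
      rw [mono_X, mono_X, mono_mul, mono_mul]⟩
    rw [adj_iff k G hG] at hij
    rcases hij with h | h
    · have := Bk.step hv h
      rw [Set.mem_ofPred_eq]
      convert this using 1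
      funext x
      unfold xt
      split_ifs <;> simp_all [Fin.ext_iff] <;> omega
    · have := Bk.step hv h
      rw [Set.mem_ofPred_eq]
      convert this using 1
      funext x
      unfold xt
      split_ifs <;> simp_all [Fin.ext_iff] <;> omega

noncomputable def rkk (k s : ℕ) (v : Fin (k + 2 + 5) → ℕ) :
    ℕ ×ₗ ℕ ×ₗ ℕ ×ₗ Lex (Fin (k + 2 + 5) → ℕ) :=
  toLex (xt k v (k + 6), toLex (xt k v 0, toLex (fl k s (xt k v), toLex v)))

theorem rkk_lt (k s : ℕ) (v u : Fin (k + 2 + 5) → ℕ) :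
    rkk k s v < rkk k s u ↔ KLt k s (xt k v) (xt k u) := by
  unfold rkk KLt
  simp only [Prod.Lex.toLex_lt_toLex]
  have : toLex v < toLex u ↔ ∃ p, p < k + 7 ∧ (∀ i, i < p → xt k v i = xt k u i) ∧
      xt k v p < xt k u p := by
    constructor
    · rintro ⟨p, h1, h2⟩
      refine ⟨p, p.2, fun i hi => ?_, ?_⟩
      · rw [xt_lt k v i (by omega), xt_lt k u i (by omega)]
        exact h1 ⟨i, by omega⟩ hi
      · rw [xt_val, xt_val]; exact h2
    · rintro ⟨p, hp, h1, h2⟩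
      refine ⟨⟨p, hp⟩, fun i hi => ?_, ?_⟩
      · have := h1 i hi
        rw [xt_val, xt_val] at this
        exact this
      · rw [xt_lt k v p hp, xt_lt k u p hp] at h2
        exact h2
  rw [this]

theorem rkk_inj (k s : ℕ) (v u : Fin (k + 2 + 5) → ℕ) (h : rkk k s v = rkk k s u) : v = u := by
  unfold rkk at h
  simp only [EmbeddingLike.apply_eq_iff_eq, Prod.mk.injEq] at h
  exact h.2.2.2

theorem main (k : ℕ) (G : SimpleGraph (Fin (k + 2 + 5))) (hG : Gᶜ = Gb (k + 2))
    (s : ℕ) (hs : 2 ≤ s) (r : ℕ) (g : Fin r → (Fin (k + 2 + 5) → ℕ))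
    (hgen : EP.IsGenSet K g (EP.edgeIdeal K G ^ s)) :
    EP.HasLinRes K g (2 * s) := by
  have F2 : ∀ i, ∃ v, Bk k s (xt k v) ∧ ∀ x, v x ≤ g i x := by
    intro i
    have h1 : EP.mono K (g i) ∈ EP.edgeIdeal K G ^ s := by
      rw [← hgen]
      exact Ideal.subset_span ⟨i, rfl⟩
    exact (mono_mem_span _ _).1 (pow_le k G hG s h1)
  have F1 : ∀ v, Bk k s (xt k v) → ∃ i, g i = v := by
    intro v hv
    have h1 := mono_mem_pow (K := K) k G hG s v hv
    rw [← hgen] at h1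
    have h2 : Set.range (fun k => EP.mono K (g k)) = EP.mono K '' Set.range g := by
      rw [← Set.range_comp]; rfl
    rw [h2, mono_mem_span] at h1
    obtain ⟨_, ⟨i, rfl⟩, h3⟩ := h1
    obtain ⟨w, hw, h4⟩ := F2 i
    have h5 : ∑ x, w x = ∑ x, v x := by rw [xt_sum, xt_sum, hv.sum, hw.sum]
    have h6 := (Finset.sum_eq_sum_iff_of_le (fun x _ => (h4 x).trans (h3 x))).1 h5
    refine ⟨i, funext fun x => le_antisymm (h3 x) ?_⟩
    rw [← h6 x (Finset.mem_univ _)]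
    exact h4 x
  classical
  set A : Finset (Fin r) := Finset.univ.filter
    (fun i => Bk k s (xt k (g i)) ∧ ∀ j, j < i → g j ≠ g i) with hA
  have F3 : ∀ v, Bk k s (xt k v) → ∃ i ∈ A, g i = v := by
    intro v hv
    obtain ⟨i, hi, hm⟩ := (wellFounded_lt (α := Fin r)).has_min {i | g i = v} (F1 v hv)
    refine ⟨i, ?_, hi⟩
    rw [hA, Finset.mem_filter]
    have hi' : g i = v := hi
    refine ⟨Finset.mem_univ _, by rw [hi']; exact hv, fun j hj he => ?_⟩
    exact hm j (he.trans hi') hj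
  have FB : ∀ i ∈ A, Bk k s (xt k (g i)) := fun i hi => (Finset.mem_filter.1 hi).2.1
  intro i j hne
  by_contra hij
  refine hne (torRank_zero g (i + 1) j ?_)
  refine lin_quot sgn_good g (fun i => rkk k s (g i)) (2 * s) A ?_ ?_ ?_ ?_ i j hij
  · intro u hu v hv h
    have h1 := rkk_inj _ _ _ _ h
    by_contra hn
    rcases lt_or_gt_of_ne hn with h2 | h2
    · exact (Finset.mem_filter.1 hv).2.2 u h2 h1
    · exact (Finset.mem_filter.1 hu).2.2 v h2 h1.symm
  · intro u hu
    rw [xt_sum, (FB u hu).sum]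
  · intro u hu v hv h
    rw [rkk_lt] at h
    obtain ⟨p, q, hpq, hp, hq, h0, hlt, hB, hK⟩ := exch hs (FB u hu) (FB v hv) h
    have hx : xt k (fun x => mv (xt k (g v)) p q x) = mv (xt k (g v)) p q := by
      refine xt_restrict k _ fun i hi => ?_
      rw [mv, if_neg (by omega), if_neg (by omega), xt, dif_neg (by omega)]
    obtain ⟨w, hw, he⟩ := F3 (fun x => mv (xt k (g v)) p q x) (by rw [hx]; exact hB)
    refine ⟨w, hw, ?_, ⟨p, hp⟩, ?_, ?_, ?_⟩
    · show rkk k s (g v) < rkk k s (g w)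
      rw [rkk_lt, he, hx]
      exact hK
    · rw [he, ← xt_val k (g v) ⟨p, hp⟩]
      simp [mv]
    · intro x hxp
      rw [he, ← xt_val k (g v) x]
      have : (x : ℕ) ≠ p := fun h => hxp (Fin.ext h)
      simp only [mv, if_neg this]
      split_ifs <;> omega
    · rw [xt_lt k _ p hp, xt_lt k _ p hp] at hlt
      exact hlt
  · intro u _
    obtain ⟨v, hv, h⟩ := F2 u
    obtain ⟨w, hw, rfl⟩ := F3 v hv
    exact ⟨w, hw, h⟩

end fin
end LQ

/-- Let `G` be a graph on `n = t + 5 ≥ 7` vertices whose complement is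
`G_{(b)}`. Then `I(G)^s` has a linear resolution for all `s ≥ 2`. -/
theorem statement19 (K : Type) [Field K] (t : ℕ) (ht : 2 ≤ t)
    (G : SimpleGraph (Fin (t + 5))) (hG : Gᶜ = Gb t)
    (s : ℕ) (hs : 2 ≤ s) (r : ℕ) (g : Fin r → (Fin (t + 5) → ℕ))
    (hgen : EP.IsGenSet K g (EP.edgeIdeal K G ^ s)) :
    EP.HasLinRes K g (2 * s) := by
  obtain ⟨k, rfl⟩ := Nat.exists_eq_add_of_le' ht
  exact LQ.main k G hG s hs r g hgen
end
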